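/- For every M, A, n ∈ ℕ with M ≥ 1, there exist h, d, m ∈ ℕ with m ≥ 2 such that G_{h,d,m} is not (M,A)-quasi-isometric to any graph that has no K_n minor. -/

import Mathlib

open SimpleGraph

namespace CGT

/-- Distance between two vertex sets, as an extended natural number. -/
noncomputable def sDist {V : Type*} (G : SimpleGraph V) (U U' : Set V) : ℕ∞ :=
  ⨅ (u : U) (v : U'), G.edist u.1 v.1

/-- The ball of radius `r` around a vertex set `U`. -/
def gBall {V : Type*} (G : SimpleGraph V) (U : Set V) (r : ℕ) : Set V :=
  {v | ∃ u ∈ U, G.edist u v ≤ (r : ℕ∞)}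

/-- A set of vertices is connected if the induced subgraph is connected. -/
def SetConn {V : Type*} (G : SimpleGraph V) (U : Set V) : Prop :=
  (G.induce U).Connected

/-- The vertex set of a walk. -/
def walkSupp {V : Type*} {G : SimpleGraph V} {a b : V} (p : G.Walk a b) : Set V :=
  {v | v ∈ p.support}

/-- `X` separates `Y` and `Z` in `G`: every path with one end in `Y` and one in `Z`
contains a vertex of `X`. -/
def Separates {V : Type*} (G : SimpleGraph V) (X Y Z : Set V) : Prop :=
  ∀ ⦃y z : V⦄, y ∈ Y → z ∈ Z → ∀ p : G.Walk y z, p.IsPath → ∃ x ∈ X, x ∈ p.support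

/-- `f` is an `(M,A)`-quasi-isometry from `G` to `H`.  The two-sided distance bound
`M⁻¹ d_G(u,v) - A ≤ d_H(f u, f v) ≤ M d_G(u,v) + A` is stated multiplied out over `ℕ∞`. -/
structure IsQI {V V' : Type*} (M A : ℕ) (G : SimpleGraph V) (H : SimpleGraph V')
    (f : V → V') : Prop where
  upper : ∀ u v : V, H.edist (f u) (f v) ≤ (M : ℕ∞) * G.edist u v + (A : ℕ∞)
  lower : ∀ u v : V, G.edist u v ≤ (M : ℕ∞) * H.edist (f u) (f v) + (M : ℕ∞) * (A : ℕ∞)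
  dense : ∀ w : V', ∃ v : V, H.edist w (f v) ≤ (A : ℕ∞)

/-- `G` is `(M,A)`-quasi-isometric to `H`. -/
def QIsometric {V V' : Type*} (M A : ℕ) (G : SimpleGraph V) (H : SimpleGraph V') : Prop :=
  ∃ f : V → V', IsQI M A G H f

/-- `X` is a minor of `G`. -/
def HasMinor {V W : Type*} (G : SimpleGraph V) (X : SimpleGraph W) : Prop :=
  ∃ U : W → Set V,
    (∀ x, (U x).Nonempty) ∧ (∀ x, SetConn G (U x)) ∧
    (∀ ⦃x y⦄, x ≠ y → Disjoint (U x) (U y)) ∧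
    ∀ ⦃x y⦄, X.Adj x y → ∃ u ∈ U x, ∃ v ∈ U y, G.Adj u v

/-- The `(a × b)`-grid graph. -/
def gridGraph (a b : ℕ) : SimpleGraph (Fin a × Fin b) :=
  SimpleGraph.fromRel (fun u v =>
    (u.1 = v.1 ∧ u.2.1 + 1 = v.2.1) ∨ (u.2 = v.2 ∧ u.1.1 + 1 = v.1.1))

/-- A `K`-fat model of `X` in `G`: disjoint connected branch sets joined by internally
disjoint branch paths, all pairwise at distance at least `K` except for a branch path and
the branch sets of its endpoints. -/
structure FatModel {V W : Type*} (G : SimpleGraph V) (X : SimpleGraph W) (K : ℕ) where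
  branch : W → Set V
  branch_nonempty : ∀ x, (branch x).Nonempty
  branch_connected : ∀ x, SetConn G (branch x)
  branch_disjoint : ∀ ⦃x y⦄, x ≠ y → Disjoint (branch x) (branch y)
  pathEnd : ∀ ⦃x y⦄, X.Adj x y → V
  path : ∀ ⦃x y⦄ (e : X.Adj x y), G.Walk (pathEnd e) (pathEnd e.symm)
  path_isPath : ∀ ⦃x y⦄ (e : X.Adj x y), (path e).IsPath
  path_symm : ∀ ⦃x y⦄ (e : X.Adj x y), path e.symm = (path e).reverse
  pathEnd_mem : ∀ ⦃x y⦄ (e : X.Adj x y), pathEnd e ∈ branch x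
  path_meets : ∀ ⦃x y⦄ (e : X.Adj x y) (z : W) (v : V), v ∈ (path e).support → v ∈ branch z →
    (z = x ∧ v = pathEnd e) ∨ (z = y ∧ v = pathEnd e.symm)
  path_int_disjoint : ∀ ⦃x y x' y'⦄ (e : X.Adj x y) (e' : X.Adj x' y'), s(x, y) ≠ s(x', y') →
    ∀ v, v ∈ (path e).support → v ∈ (path e').support → v = pathEnd e' ∨ v = pathEnd e'.symm
  fat_branch : ∀ ⦃x y⦄, x ≠ y → (K : ℕ∞) ≤ sDist G (branch x) (branch y)
  fat_path_branch : ∀ ⦃x y⦄ (e : X.Adj x y) (z : W), z ≠ x → z ≠ y →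
    (K : ℕ∞) ≤ sDist G (walkSupp (path e)) (branch z)
  fat_paths : ∀ ⦃x y x' y'⦄ (e : X.Adj x y) (e' : X.Adj x' y'), s(x, y) ≠ s(x', y') →
    (K : ℕ∞) ≤ sDist G (walkSupp (path e)) (walkSupp (path e'))

/-- `X` is a `K`-fat minor of `G`. -/
def IsFatMinor {V W : Type*} (G : SimpleGraph V) (X : SimpleGraph W) (K : ℕ) : Prop :=
  Nonempty (FatModel G X K)

/-- `W` is a `K`-fat `n`-path-connected set in `G`. -/
def FatPathConn {V : Type*} (G : SimpleGraph V) (K n : ℕ) (W : Set V) : Prop :=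
  (∃ S : Finset V, ↑S ⊆ W ∧ 2 * n ≤ S.card) ∧
  (∀ ⦃u v : V⦄, u ∈ W → v ∈ W → u ≠ v → (K : ℕ∞) ≤ G.edist u v) ∧
  ∀ l : ℕ, l ≤ n → ∀ A B : Finset V, ↑A ⊆ W → ↑B ⊆ W → A.card = l → B.card = l →
    ∃ (a b : Fin l → V) (P : ∀ i : Fin l, G.Walk (a i) (b i)),
      (∀ i, (P i).IsPath) ∧ (∀ i, a i ∈ A ∧ b i ∈ B) ∧
      ∀ i j, i ≠ j → (K : ℕ∞) ≤ sDist G (walkSupp (P i)) (walkSupp (P j))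

end CGT

namespace Ghdm

/-- Raw vertex codes for the graphs `G_{h,d,m}`:
`path k` is the `k`-th vertex of the base path; `tree j i p` is the vertex at position `p`
of the `i`-th binary tree at level `j` (the root being position `[]`); and
`spine j i k t e s` is the `s`-th internal vertex of the spine from the `k`-th leaf of that
tree to the `e`-th element of the `t`-th local gluing set at level `j-1`. -/
inductive Raw : Type where
  | path (k : ℕ)
  | tree (j i : ℕ) (p : List Bool)
  | spine (j i k t e s : ℕ)
deriving DecidableEq

/-- `N = 2^{h+1} - 1`, the number of copies of `G_{h,d,m-1}` glued inside `G_{h,d,m}`. -/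
def NN (h : ℕ) : ℕ := 2 ^ (h + 1) - 1

/-- Canonical representative of a raw vertex code: all tree roots are identified with the
single root `tree m 1 []`, and the leftmost leaf of tree `i > 1` is identified with the
rightmost leaf of tree `i - 1` (consecutive copies are glued along these leaves). -/
def canon (h m : ℕ) : Raw → Raw
  | .tree j i p =>
    if p = [] then .tree m 1 []
    else if p = List.replicate h false ∧ 1 < i then .tree j (i - 1) (List.replicate h true)
    else .tree j i p
  | x => x

/-- The `q`-bit binary representation of `i` (most significant bit first);
`false` means "left". -/
def natToBits (q i : ℕ) : List Bool := (List.range q).map fun a => Nat.testBit i (q - 1 - a)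

/-- Position of the `k`-th leaf (1-based, from the left) in a binary tree of height `h`. -/
def leafPos (h k : ℕ) : List Bool := natToBits h (k - 1)

/-- The `e`-th element of the `g`-th gluing set `V^{jv}_g` (at level `jv`):
its element `e = 1` is an anchor of the base path, and its element `e ≥ 2` is a shared
extreme leaf of the trees at level `e`. -/
def VsetElem (h d jv g e : ℕ) : Raw :=
  if e = 1 then .path ((g - 1) * NN h ^ (jv - 1) * (d + 1))
  else if (g - 1) * NN h ^ (jv - e) = 0 then .tree e 1 (List.replicate h false)
  else .tree e ((g - 1) * NN h ^ (jv - e)) (List.replicate h true)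

/-- Valid (canonical) vertex codes of `G_{h,d,m}`. -/
def Valid (h d m : ℕ) : Raw → Prop
  | .path k => k ≤ (d + 1) * NN h ^ (m - 1)
  | .tree j i p => 2 ≤ j ∧ j ≤ m ∧ 1 ≤ i ∧ i ≤ NN h ^ (m - j) ∧ p.length ≤ h ∧
      (p = [] → j = m ∧ i = 1) ∧ (p = List.replicate h false → p ≠ [] → i = 1)
  | .spine j i k t e s => 2 ≤ j ∧ j ≤ m ∧ 1 ≤ i ∧ i ≤ NN h ^ (m - j) ∧
      1 ≤ k ∧ k ≤ 2 ^ h ∧ (t = 2 * k - 2 ∨ t = 2 * k + 1) ∧ 1 ≤ t ∧ t ≤ 2 ^ (h + 1) ∧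
      1 ≤ e ∧ e ≤ j - 1 ∧ 1 ≤ s ∧ s ≤ d

/-- Generating adjacencies between raw vertex codes: consecutive base path vertices,
parent/child in the binary trees, consecutive spine vertices, a spine and the leaf it
starts at, a spine and the gluing-set vertex it ends at (the latter collapsed to a single
edge when `d = 0`). -/
inductive rawAdj (h d : ℕ) : Raw → Raw → Prop
  | base (k : ℕ) : rawAdj h d (.path k) (.path (k + 1))
  | child (j i : ℕ) (p : List Bool) (b : Bool) : p.length < h →
      rawAdj h d (.tree j i p) (.tree j i (p ++ [b]))
  | step (j i k t e s : ℕ) : rawAdj h d (.spine j i k t e s) (.spine j i k t e (s + 1))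
  | toLeaf (j i k t e : ℕ) : rawAdj h d (.tree j i (leafPos h k)) (.spine j i k t e 1)
  | toV (j i k t e : ℕ) :
      rawAdj h d (.spine j i k t e d) (VsetElem h d (j - 1) ((i - 1) * NN h + t) e)
  | short (j i k t e : ℕ) : d = 0 → 1 ≤ k → k ≤ 2 ^ h → (t = 2 * k - 2 ∨ t = 2 * k + 1) →
      1 ≤ t → t ≤ 2 ^ (h + 1) → 1 ≤ e → e ≤ j - 1 →
      rawAdj h d (.tree j i (leafPos h k)) (VsetElem h d (j - 1) ((i - 1) * NN h + t) e)

/-- Adjacency of canonical representatives. -/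
def rel (h d m : ℕ) (x y : Raw) : Prop :=
  ∃ a b, rawAdj h d a b ∧ x = canon h m a ∧ y = canon h m b

/-- The vertex set of `G_{h,d,m}`. -/
def Verts (h d m : ℕ) : Set Raw := {x | Valid h d m x}

/-- The graph `G_{h,d,m}`. -/
def G (h d m : ℕ) : SimpleGraph (Verts h d m) :=
  (SimpleGraph.fromRel (rel h d m)).induce (Verts h d m)

/-- Lift a set of raw codes to a set of vertices of `G_{h,d,m}`. -/
def lift {h d m : ℕ} (S : Set Raw) : Set (Verts h d m) := Subtype.val ⁻¹' S

/-- The root `R(G_{h,d,m})`. -/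
def RootR (m : ℕ) : Raw := .tree m 1 []

/-- The gluing set `V^{jv}_g` of `G_{h,d,m}`, as a set of raw codes. -/
def VsetRaw (h d m jv g : ℕ) : Set Raw :=
  {x | ∃ e, 1 ≤ e ∧ e ≤ jv ∧ x = canon h m (VsetElem h d jv g e)}

/-- The set `S(G_{h,d,m})`. -/
def SsetR (h d m : ℕ) : Set Raw :=
  VsetRaw h d m (m - 1) 1 ∪ {canon h m (.tree m 1 (leafPos h 1))}

/-- The set `T(G_{h,d,m})`. -/
def TsetR (h d m : ℕ) : Set Raw :=
  VsetRaw h d m (m - 1) (2 ^ (h + 1)) ∪ {canon h m (.tree m 1 (leafPos h (2 ^ h)))}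

/-- For a vertex of the top binary tree at position `p`, the (1-based) index of the
leftmost leaf of the top tree below it. -/
def kOf (h : ℕ) (p : List Bool) : ℕ :=
  (p.foldl (fun a b => 2 * a + if b then 1 else 0) 0) * 2 ^ (h - p.length) + 1

/-- `S(Δ(x))` for the vertex `x` of the top binary tree `B(G_{h,d,m})` at position `p`. -/
def SDeltaR (h d m : ℕ) (p : List Bool) : Set Raw :=
  VsetRaw h d m (m - 1) (2 * kOf h p - 1) ∪ {canon h m (.tree m 1 (leafPos h (kOf h p)))}

/-- The leaf of `B(G_{h,d,m})` immediately to the left of the leftmost leaf below the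
top-tree vertex at position `p`; it is the unique leaf joined by spines to `S(Δ(x))`. -/
def leafLeftR (h m : ℕ) (p : List Bool) : Raw :=
  canon h m (.tree m 1 (leafPos h (kOf h p - 1)))

end Ghdm


namespace QI

/-- Reachability inside a set. -/
inductive Rch {Q : Type*} (Γ : SimpleGraph Q) (U : Set Q) : Q → Q → Prop
  | refl (a : Q) : a ∈ U → Rch Γ U a a
  | tail {a b c : Q} : Rch Γ U a b → Γ.Adj b c → c ∈ U → Rch Γ U a c

/-- Connected set (possibly empty). -/
def Cn {Q : Type*} (Γ : SimpleGraph Q) (U : Set Q) : Prop :=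
  ∀ a ∈ U, ∀ b ∈ U, Rch Γ U a b

section basics
variable {Q : Type*} {Γ Γ' : SimpleGraph Q} {U W : Set Q} {a b c : Q}

theorem Rch.right (h : Rch Γ U a b) : b ∈ U := by
  cases h <;> assumption

theorem Rch.left (h : Rch Γ U a b) : a ∈ U := by
  induction h <;> assumption

theorem Rch.mono (h : Rch Γ U a b) (hg : Γ ≤ Γ') (hu : U ⊆ W) : Rch Γ' W a b := by
  induction h with
  | refl ha => exact .refl _ (hu ha)
  | tail _ h2 h3 ih => exact .tail ih (hg h2) (hu h3)

theorem Rch.monoU (h : Rch Γ U a b) (hu : U ⊆ W) : Rch Γ W a b := h.mono le_rfl hu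

theorem Rch.trans (h : Rch Γ U a b) (h' : Rch Γ U b c) : Rch Γ U a c := by
  induction h' with
  | refl ha => exact h
  | tail _ h2 h3 ih => exact .tail ih h2 h3

theorem Rch.symm (h : Rch Γ U a b) : Rch Γ U b a := by
  induction h with
  | refl ha => exact .refl _ ha
  | tail h1 h2 h3 ih =>
    exact ((Rch.refl _ h3).tail h2.symm h1.right).trans ih

theorem Rch.of_adj (h : Γ.Adj a b) (ha : a ∈ U) (hb : b ∈ U) : Rch Γ U a b :=
  (Rch.refl _ ha).tail h hb

/-- A walk leaving a set has a step leaving it. -/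
theorem Rch.exit (h : Rch Γ U a b) (p : Q → Prop) (ha : p a) (hb : ¬ p b) :
    ∃ x y, p x ∧ ¬ p y ∧ x ∈ U ∧ y ∈ U ∧ Γ.Adj x y := by
  induction h with
  | refl _ => exact absurd ha hb
  | @tail b c h1 h2 h3 ih =>
    by_cases hp : p b
    · exact ⟨_, _, hp, hb, h1.right, h3, h2⟩
    · exact ih hp

theorem Cn.of_center (x : Q) (h : ∀ b ∈ U, Rch Γ U x b) : Cn Γ U :=
  fun a ha b hb => (h a ha).symm.trans (h b hb)

theorem Cn.union (hU : Cn Γ U) (hW : Cn Γ W) (x : Q) (hx : x ∈ U) (hx' : x ∈ W) :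
    Cn Γ (U ∪ W) := by
  apply Cn.of_center x
  rintro b (hb | hb)
  · exact (hU _ hx _ hb).monoU Set.subset_union_left
  · exact (hW _ hx' _ hb).monoU Set.subset_union_right

theorem Cn.union_adj (hU : Cn Γ U) (hW : Cn Γ W) (x y : Q) (hx : x ∈ U) (hy : y ∈ W)
    (hxy : Γ.Adj x y) : Cn Γ (U ∪ W) := by
  apply Cn.of_center x
  rintro b (hb | hb)
  · exact (hU _ hx _ hb).monoU Set.subset_union_left
  · exact (Rch.of_adj hxy (Or.inl hx) (Or.inr hy)).trans
      ((hW _ hy _ hb).monoU Set.subset_union_right)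

theorem Cn.mono (hU : Cn Γ U) (h : Γ ≤ Γ') : Cn Γ' U :=
  fun a ha b hb => (hU a ha b hb).mono h subset_rfl

/-- The component of `a` in `U`. -/
theorem Cn.comp (Γ : SimpleGraph Q) (U : Set Q) (a : Q) : Cn Γ {b | Rch Γ U a b} := by
  apply Cn.of_center a
  intro b hb
  have : ∀ c, Rch Γ U a c → Rch Γ {b | Rch Γ U a b} a c := by
    intro c hc
    induction hc with
    | refl ha => exact .refl _ (Rch.refl _ ha)
    | tail h1 h2 h3 ih0 => exact ih0.tail h2 (h1.tail h2 h3)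
  exact this b hb

theorem Cn.trim (hU : Cn Γ U) (ha : a ∈ U) (hz : b ∈ U) :
    ∃ P ⊆ U, Cn Γ P ∧ a ∈ P ∧ b ∈ P ∧ ∀ v ∈ P, v ≠ b → Rch Γ (U \ {b}) a v := by
  by_cases hab : a = b
  · subst hab
    refine ⟨{a}, by simpa using ha, ?_, rfl, rfl, ?_⟩
    · rintro _ rfl _ rfl; exact .refl _ rfl
    · intro v hv hv'; exact absurd hv hv'
  · have h0 : Rch Γ (U \ {b}) a a := .refl _ ⟨ha, hab⟩
    obtain ⟨x, y, hx, hy, hxU, hyU, hadj⟩ :=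
      (hU a ha b hz).exit (fun v => Rch Γ (U \ {b}) a v) h0 (fun h => h.right.2 rfl)
    have hyb : y = b := by
      by_contra hne
      exact hy (hx.tail hadj ⟨hyU, hne⟩)
    subst hyb
    refine ⟨{v | Rch Γ (U \ {y}) a v} ∪ {y}, ?_, ?_, Or.inl h0, Or.inr rfl, ?_⟩
    · rintro v (hv | rfl)
      · exact hv.right.1
      · exact hz
    · refine (Cn.comp Γ _ a).union_adj ?_ x y hx rfl hadj
      rintro _ rfl _ rfl; exact .refl _ rfl
    · rintro v (hv | rfl) hne
      · exact hv
      · exact absurd rfl hne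

end basics

/-- `k` disjoint connected sets each meeting `S` and `T`. -/
def Linked {Q : Type*} (Γ : SimpleGraph Q) (S T : Set Q) (k : ℕ) : Prop :=
  ∃ P : Fin k → Set Q, (∀ i, Cn Γ (P i)) ∧ (∀ i, ∃ s ∈ S, s ∈ P i) ∧ (∀ i, ∃ t ∈ T, t ∈ P i) ∧
    ∀ i j x, x ∈ P i → x ∈ P j → i = j

theorem pigeon {Q : Type*} {k : ℕ} (P : Fin k → Set Q)
    (hd : ∀ i j x, x ∈ P i → x ∈ P j → i = j) (V : Finset Q) (hV : V.card ≤ k)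
    (hm : ∀ i, ∃ z ∈ V, z ∈ P i) :
    ∃ z : Fin k → Q, (∀ i, z i ∈ V ∧ z i ∈ P i) ∧ (∀ v ∈ V, ∃ i, z i = v) ∧
      ∀ v ∈ V, ∀ i, v ∈ P i → v = z i := by
  classical
  choose z hz using hm
  have hinj : Function.Injective z := fun i j h => hd i j (z i) (hz i).2 (h ▸ (hz j).2)
  have himg : Finset.univ.image z = V := by
    apply Finset.eq_of_subset_of_card_le
    · intro x hx
      simp only [Finset.mem_image, Finset.mem_univ, true_and] at hx
      obtain ⟨i, rfl⟩ := hx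
      exact (hz i).1
    · rw [Finset.card_image_of_injective _ hinj]; simpa using hV
  have hs : ∀ v ∈ V, ∃ i, z i = v := by
    intro v hv
    rw [← himg] at hv
    simpa using hv
  refine ⟨z, hz, hs, ?_⟩
  intro v hv i hi
  obtain ⟨j, rfl⟩ := hs v hv
  rw [hd i j _ hi (hz j).2]

/-- Some member of a disjoint family of `k` sets is missed by a set of fewer than `k` points. -/
theorem missed {Q : Type*} {k : ℕ} (P : Fin k → Set Q)
    (hd : ∀ i j x, x ∈ P i → x ∈ P j → i = j) (X : Finset Q) (hX : X.card < k) :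
    ∃ i, ∀ x ∈ P i, x ∉ X := by
  classical
  by_contra hcon
  push Not at hcon
  choose z hz using hcon
  have hinj : Function.Injective z := fun i j h => hd i j (z i) (hz i).1 (h ▸ (hz j).1)
  have : (Finset.univ.image z).card ≤ X.card := by
    apply Finset.card_le_card
    intro x hx
    simp only [Finset.mem_image, Finset.mem_univ, true_and] at hx
    obtain ⟨i, rfl⟩ := hx
    exact (hz i).2
  rw [Finset.card_image_of_injective _ hinj] at this
  simp at this
  omega

theorem menger_aux {Q : Type*} {Γ Γ' : SimpleGraph Q} {S T X : Set Q} {x y : Q}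
    (hdel : ∀ b c, Γ.Adj b c → Γ'.Adj b c ∨ (b = x ∧ c = y) ∨ (b = y ∧ c = x))
    (hsep : ∀ s ∈ S, ∀ t ∈ T, ¬ Rch Γ' Xᶜ s t)
    (hy : ∀ s ∈ S, ¬ Rch Γ' Xᶜ s y) (Y : Set Q) {s t : Q} (hs : s ∈ S) (ht : t ∈ T)
    (h : Rch Γ Yᶜ s t) : ∃ z ∈ insert x X, Rch Γ' Yᶜ s z := by
  have key : ∀ v, Rch Γ Yᶜ s v → (∃ z ∈ insert x X, Rch Γ' Yᶜ s z) ∨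
      (Rch Γ' (Yᶜ ∩ (insert x X)ᶜ) s v) := by
    intro v hv
    induction hv with
    | refl ha =>
      by_cases hax : s ∈ insert x X
      · exact Or.inl ⟨s, hax, .refl _ ha⟩
      · exact Or.inr (.refl _ ⟨ha, hax⟩)
    | @tail b c h1 h2 h3 ih =>
      rcases ih with h | h
      · exact Or.inl h
      · rcases hdel _ _ h2 with h4 | ⟨rfl, rfl⟩ | ⟨rfl, rfl⟩
        · by_cases hc : c ∈ insert x X
          · exact Or.inl ⟨c, hc, (h.monoU Set.inter_subset_left).tail h4 h3⟩
          · exact Or.inr (h.tail h4 ⟨h3, hc⟩)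
        · exact absurd (Set.mem_insert _ _) h.right.2
        · exact absurd (h.monoU (fun v hv hvX => hv.2 (Set.mem_insert_of_mem _ hvX))) (hy _ hs)
  rcases key t h with h | h
  · exact h
  · exact absurd (h.monoU (fun v hv hvX => hv.2 (Set.mem_insert_of_mem _ hvX))) (hsep _ hs _ ht)

theorem menger {Q : Type*} (n : ℕ) : ∀ (Γ : SimpleGraph Q), Γ.edgeSet.Finite →
    Γ.edgeSet.ncard = n → ∀ (S T : Set Q) (k : ℕ),
    (∀ X : Finset Q, X.card < k → ∃ s ∈ S, ∃ t ∈ T, Rch Γ (↑X)ᶜ s t) → Linked Γ S T k := by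
  classical
  induction n using Nat.strong_induction_on with
  | _ n ih =>
  intro Γ hfin hn S T k hyp
  by_cases hE : Γ.edgeSet = ∅
  · -- no edges
    have hadj : ∀ a b, ¬ Γ.Adj a b := by
      intro a b h
      have : s(a, b) ∈ Γ.edgeSet := h
      rw [hE] at this; exact this
    have hr : ∀ (U : Set Q) a b, Rch Γ U a b → a = b := by
      intro U a b h
      induction h with
      | refl _ => rfl
      | tail _ h2 => exact absurd h2 (hadj _ _)
    have : ∀ l ≤ k, ∃ X : Finset Q, X.card = l ∧ ∀ x ∈ X, x ∈ S ∧ x ∈ T := by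
      intro l
      induction l with
      | zero => intro _; exact ⟨∅, rfl, by simp⟩
      | succ l ihl =>
        intro hl
        obtain ⟨X, hX, hX'⟩ := ihl (by omega)
        obtain ⟨s, hs, t, ht, hst⟩ := hyp X (by omega)
        have h1 := hr _ _ _ hst
        subst h1
        refine ⟨insert s X, ?_, ?_⟩
        · rw [Finset.card_insert_of_notMem, hX]
          exact fun h => hst.left (by simpa using h)
        · intro x hx
          rcases Finset.mem_insert.1 hx with rfl | hx
          · exact ⟨hs, ht⟩
          · exact hX' _ hx
    obtain ⟨X, hX, hX'⟩ := this k le_rfl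
    let e := (X.equivFinOfCardEq hX).symm
    refine ⟨fun i => {(e i : Q)}, ?_, ?_, ?_, ?_⟩
    · rintro i _ rfl _ rfl; exact .refl _ rfl
    · intro i; exact ⟨e i, (hX' _ (e i).2).1, rfl⟩
    · intro i; exact ⟨e i, (hX' _ (e i).2).2, rfl⟩
    · intro i j x hi hj
      apply e.injective
      apply Subtype.ext
      exact (Set.mem_singleton_iff.1 hi).symm.trans (Set.mem_singleton_iff.1 hj)
  · obtain ⟨e, he⟩ := Set.nonempty_iff_ne_empty.2 hE
    set Γ' := Γ.deleteEdges {e} with hΓ'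
    have hle : Γ' ≤ Γ := SimpleGraph.deleteEdges_le _
    have hE' : Γ'.edgeSet = Γ.edgeSet \ {e} := by rw [hΓ', SimpleGraph.edgeSet_deleteEdges]
    have hfin' : Γ'.edgeSet.Finite := by rw [hE']; exact hfin.sdiff
    have hcard' : Γ'.edgeSet.ncard < n := by
      rw [hE', ← hn]; exact Set.ncard_sdiff_singleton_lt_of_mem he hfin
    have hadj' : ∀ b c, Γ.Adj b c → Γ'.Adj b c ∨ s(b, c) = e := by
      intro b c h
      by_cases hbc : s(b, c) = e
      · exact Or.inr hbc
      · left; rw [hΓ', SimpleGraph.deleteEdges_adj]; exact ⟨h, by simpa using hbc⟩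
    by_cases hyp' : ∀ X : Finset Q, X.card < k → ∃ s ∈ S, ∃ t ∈ T, Rch Γ' (↑X)ᶜ s t
    · obtain ⟨P, h1, h2⟩ := ih _ hcard' Γ' hfin' rfl S T k hyp'
      exact ⟨P, fun i => (h1 i).mono hle, h2⟩
    push Not at hyp'
    obtain ⟨X, hXk, hsep⟩ := hyp'
    obtain ⟨s0, hs0, t0, ht0, hst0⟩ := hyp X hXk
    obtain ⟨x, y, ⟨s1, hs1, hx⟩, hy0, hxX, hyX, hxy⟩ :=
      hst0.exit (fun v => ∃ s ∈ S, Rch Γ' (↑X)ᶜ s v) ⟨s0, hs0, .refl _ hst0.left⟩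
        (fun ⟨s, hs, h⟩ => hsep s hs t0 ht0 h)
    have hy : ∀ s ∈ S, ¬ Rch Γ' (↑X)ᶜ s y := fun s hs h => hy0 ⟨s, hs, h⟩
    have hxT : ∀ t ∈ T, ¬ Rch Γ' (↑X)ᶜ t x := fun t ht h => hsep s1 hs1 t ht (hx.trans h.symm)
    have hexy : e = s(x, y) := by
      rcases hadj' x y hxy with h | h
      · exact absurd (hx.tail h hyX) (hy s1 hs1)
      · exact h.symm
    have hdel : ∀ b c, Γ.Adj b c → Γ'.Adj b c ∨ (b = x ∧ c = y) ∨ (b = y ∧ c = x) := by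
      intro b c h
      rcases hadj' b c h with h | h
      · exact Or.inl h
      · rw [hexy, Sym2.eq_iff] at h; exact Or.inr h
    have hdel2 : ∀ b c, Γ.Adj b c → Γ'.Adj b c ∨ (b = y ∧ c = x) ∨ (b = x ∧ c = y) := by
      intro b c h
      rcases hdel b c h with h | h | h
      · exact Or.inl h
      · exact Or.inr (Or.inr h)
      · exact Or.inr (Or.inl h)
    have hsep2 : ∀ t ∈ T, ∀ s ∈ S, ¬ Rch Γ' (↑X)ᶜ t s := fun t ht s hs h => hsep s hs t ht h.symm
    have L1 : Linked Γ' S ↑(insert x X) k := by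
      apply ih _ hcard' Γ' hfin' rfl
      intro Y hY
      obtain ⟨s, hs, t, ht, hst⟩ := hyp Y hY
      obtain ⟨z, hz, hz'⟩ := menger_aux hdel hsep hy _ hs ht hst
      exact ⟨s, hs, z, by simpa using hz, hz'⟩
    have L2 : Linked Γ' T ↑(insert y X) k := by
      apply ih _ hcard' Γ' hfin' rfl
      intro Y hY
      obtain ⟨s, hs, t, ht, hst⟩ := hyp Y hY
      obtain ⟨z, hz, hz'⟩ := menger_aux hdel2 hsep2 hxT _ ht hs hst.symm
      exact ⟨t, ht, z, by simpa using hz, hz'⟩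
    have hc1 : (insert x X).card ≤ k := (Finset.card_insert_le _ _).trans hXk
    have hc2 : (insert y X).card ≤ k := (Finset.card_insert_le _ _).trans hXk
    obtain ⟨P, hPc, hPS, hPX, hPd⟩ := L1
    obtain ⟨R, hRc, hRT, hRX, hRd⟩ := L2
    obtain ⟨z, hz, hzs, hzu⟩ := pigeon P hPd _ hc1 (by simpa using hPX)
    obtain ⟨w, hw, hws, hwu⟩ := pigeon R hRd _ hc2 (by simpa using hRX)
    choose s hsS hsP using hPS
    choose t htT htR using hRT
    choose P' hP'sub hP'c hP's hP'z hP'r using fun i => (hPc i).trim (hsP i) (hz i).2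
    choose R' hR'sub hR'c hR't hR'w hR'r using fun i => (hRc i).trim (htR i) (hw i).2
    have hPr : ∀ i, ∀ v ∈ P' i, v ∉ X → Rch Γ' (↑X)ᶜ (s i) v := by
      intro i v hv hvX
      by_cases hvz : v = z i
      · subst hvz
        refine (hPc i _ (hsP i) _ (hz i).2).monoU ?_
        intro u hu huX
        exact hvX ((hzu u (Finset.mem_insert_of_mem huX) i hu) ▸ huX)
      · refine (hP'r i v hv hvz).monoU ?_
        intro u hu huX
        exact hu.2 (hzu u (Finset.mem_insert_of_mem huX) i hu.1)
    have hRr : ∀ i, ∀ v ∈ R' i, v ∉ X → Rch Γ' (↑X)ᶜ (t i) v := by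
      intro i v hv hvX
      by_cases hvz : v = w i
      · subst hvz
        refine (hRc i _ (htR i) _ (hw i).2).monoU ?_
        intro u hu huX
        exact hvX ((hwu u (Finset.mem_insert_of_mem huX) i hu) ▸ huX)
      · refine (hR'r i v hv hvz).monoU ?_
        intro u hu huX
        exact hu.2 (hwu u (Finset.mem_insert_of_mem huX) i hu.1)
    have hPR : ∀ i j v, v ∈ P' i → v ∈ R' j → v ∈ X ∧ v = z i ∧ v = w j := by
      intro i j v hi hj
      by_cases hvX : v ∈ X
      · exact ⟨hvX, hzu _ (Finset.mem_insert_of_mem hvX) i (hP'sub i hi),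
          hwu _ (Finset.mem_insert_of_mem hvX) j (hR'sub j hj)⟩
      · exact absurd ((hPr i v hi hvX).trans (hRr j v hj hvX).symm) (hsep _ (hsS i) _ (htT j))
    -- matching
    have hσ : ∀ i, ∃ j, (z i = x ∧ w j = y) ∨ (z i ∈ X ∧ w j = z i) := by
      intro i
      rcases Finset.mem_insert.1 (hz i).1 with h | h
      · obtain ⟨j, hj⟩ := hws y (Finset.mem_insert_self _ _)
        exact ⟨j, Or.inl ⟨h, hj⟩⟩
      · obtain ⟨j, hj⟩ := hws (z i) (Finset.mem_insert_of_mem h)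
        exact ⟨j, Or.inr ⟨h, hj⟩⟩
    choose σ hσ using hσ
    have hzinj : ∀ i j, z i = z j → i = j := fun i j h => hPd i j (z i) (hz i).2 (h ▸ (hz j).2)
    have hyX' : y ∉ X := by simpa using hyX
    have hxX' : x ∉ X := by simpa using hxX
    have hσinj : ∀ i j, σ i = σ j → i = j := by
      intro i j h
      apply hzinj
      have h1 := hσ i
      have h2 := hσ j
      rw [h] at h1
      rcases h1 with ⟨h1, h1'⟩ | ⟨h1, h1'⟩ <;> rcases h2 with ⟨h2, h2'⟩ | ⟨h2, h2'⟩
      · rw [h1, h2]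
      · exact absurd (h2'.symm.trans h1' ▸ h2) hyX'
      · exact absurd (h1'.symm.trans h2' ▸ h1) hyX'
      · rw [← h1', h2']
    refine ⟨fun i => P' i ∪ R' (σ i), ?_, ?_, ?_, ?_⟩
    · intro i
      rcases hσ i with ⟨h1, h2⟩ | ⟨h1, h2⟩
      · exact ((hP'c i).mono hle).union_adj ((hR'c _).mono hle) x y (h1 ▸ hP'z i) (h2 ▸ hR'w _) hxy
      · exact ((hP'c i).mono hle).union ((hR'c _).mono hle) (z i) (hP'z i) (h2 ▸ hR'w _)
    · intro i; exact ⟨s i, hsS i, Or.inl (hP's i)⟩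
    · intro i; exact ⟨t (σ i), htT _, Or.inr (hR't _)⟩
    · have cross : ∀ i j v, v ∈ P' i → v ∈ R' (σ j) → i = j := by
        intro i j v hi hj
        obtain ⟨h1, h2, h3⟩ := hPR _ _ _ hi hj
        rcases hσ j with ⟨h4, h5⟩ | ⟨h4, h5⟩
        · exact absurd (h3.trans h5 ▸ h1) hyX'
        · exact hzinj _ _ (h2.symm.trans (h3.trans h5))
      rintro i j v (hi | hi) (hj | hj)
      · exact hPd i j v (hP'sub i hi) (hP'sub j hj)
      · exact cross i j v hi hj
      · exact (cross j i v hj hi).symm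
      · exact hσinj _ _ (hRd _ _ v (hR'sub _ hi) (hR'sub _ hj))

end QI

namespace QI

section absys
variable {Q : Type*}

/-- A piece together with its two extreme hubs. -/
def Zp (η : ℕ → ℕ → Q) (Z : ℕ → ℕ → Set Q) (j i : ℕ) : Set Q := Z j i ∪ {η j i, η j (i + 1)}

/-- The combinatorial structure that survives in the target graph. -/
structure Sys (Γ : SimpleGraph Q) (h N m : ℕ) (η : ℕ → ℕ → Q) (Z : ℕ → ℕ → Set Q)
    (y : ℕ → ℕ → ℕ → Q) : Prop where
  hN : N + 1 = 2 * 2 ^ h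
  hN1 : 3 ≤ N
  inj : ∀ e x e' x', 1 ≤ e → e ≤ m → x ≤ N ^ (m - e) → 1 ≤ e' → e' ≤ m → x' ≤ N ^ (m - e') →
    η e x = η e' x' → e = e' ∧ x = x'
  Zd : ∀ j i j' i' q, q ∈ Z j i → q ∈ Z j' i' → j = j' ∧ i = i'
  ηZ : ∀ e x j i, 1 ≤ e → e ≤ m → x ≤ N ^ (m - e) → η e x ∉ Z j i
  seg : ∀ i, i < N ^ (m - 1) → Rch Γ (Zp η Z 1 i) (η 1 i) (η 1 (i + 1))
  yfirst : ∀ j i, 1 ≤ j → j + 1 ≤ m → i < N ^ (m - (j + 1)) → y (j + 1) i 0 = η (j + 1) i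
  ylast : ∀ j i, 1 ≤ j → j + 1 ≤ m → i < N ^ (m - (j + 1)) →
    y (j + 1) i (2 ^ h - 1) = η (j + 1) (i + 1)
  ymem : ∀ j i κ, 1 ≤ j → j + 1 ≤ m → i < N ^ (m - (j + 1)) → κ < 2 ^ h →
    y (j + 1) i κ ∈ Zp η Z (j + 1) i
  link : ∀ j i κ τ e, 1 ≤ j → j + 1 ≤ m → i < N ^ (m - (j + 1)) → κ < 2 ^ h →
    (τ + 1 = 2 * κ ∨ τ = 2 * κ + 2) → τ ≤ N → 1 ≤ e → e ≤ j →
    Rch Γ (insert (η e ((i * N + τ) * N ^ (j - e))) (Zp η Z (j + 1) i)) (y (j + 1) i κ)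
      (η e ((i * N + τ) * N ^ (j - e)))

/-- Region of the chain of level-`j` copies `a, …, b-1`. -/
def RR (N : ℕ) (η : ℕ → ℕ → Q) (Z : ℕ → ℕ → Set Q) (j a b : ℕ) : Set Q :=
  {q | (∃ e x, 1 ≤ e ∧ e ≤ j ∧ a * N ^ (j - e) ≤ x ∧ x ≤ b * N ^ (j - e) ∧ q = η e x) ∨
    (∃ e x, 1 ≤ e ∧ e ≤ j ∧ a * N ^ (j - e) ≤ x ∧ x < b * N ^ (j - e) ∧ q ∈ Z e x)}

/-- Gluing set. -/
def VV (N : ℕ) (η : ℕ → ℕ → Q) (j c : ℕ) : Set Q :=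
  {q | ∃ e, 1 ≤ e ∧ e ≤ j ∧ q = η e (c * N ^ (j - e))}

/-- `j` disjoint connected sets crossing the chain. -/
def Chain (Γ : SimpleGraph Q) (N : ℕ) (η : ℕ → ℕ → Q) (Z : ℕ → ℕ → Set Q) (j a b : ℕ) : Prop :=
  ∃ P : Fin j → Set Q, (∀ i, Cn Γ (P i)) ∧ (∀ i, P i ⊆ RR N η Z j a b) ∧
    (∀ i i' x, x ∈ P i → x ∈ P i' → i = i') ∧
    ∀ c, a ≤ c → c ≤ b → ∀ i, ∃ v ∈ VV N η j c, v ∈ P i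

variable {Γ : SimpleGraph Q} {h N m : ℕ} {η : ℕ → ℕ → Q} {Z : ℕ → ℕ → Set Q}
  {y : ℕ → ℕ → ℕ → Q}

theorem RR_mono {j a b a' b' : ℕ} (ha : a' ≤ a) (hb : b ≤ b') :
    RR N η Z j a b ⊆ RR N η Z j a' b' := by
  rintro q (⟨e, x, h1, h2, h3, h4, h5⟩ | ⟨e, x, h1, h2, h3, h4, h5⟩)
  · exact Or.inl ⟨e, x, h1, h2, (Nat.mul_le_mul_right _ ha).trans h3,
      h4.trans (Nat.mul_le_mul_right _ hb), h5⟩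
  · exact Or.inr ⟨e, x, h1, h2, (Nat.mul_le_mul_right _ ha).trans h3,
      h4.trans_le (Nat.mul_le_mul_right _ hb), h5⟩

theorem VV_sub {j a b c : ℕ} (ha : a ≤ c) (hb : c ≤ b) : VV N η j c ⊆ RR N η Z j a b := by
  rintro q ⟨e, h1, h2, h3⟩
  exact Or.inl ⟨e, _, h1, h2, Nat.mul_le_mul_right _ ha, Nat.mul_le_mul_right _ hb, h3⟩

theorem pw (N : ℕ) {m j e : ℕ} (hj : j ≤ m) (he : e ≤ j) : N ^ (m - e) = N ^ (m - j) * N ^ (j - e) := by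
  rw [← pow_add]; congr 1; omega

theorem vld {m j e b x : ℕ} (hj : j ≤ m) (he : e ≤ j) (hb : b ≤ N ^ (m - j))
    (hx : x ≤ b * N ^ (j - e)) : x ≤ N ^ (m - e) := by
  rw [pw N hj he]; exact hx.trans (Nat.mul_le_mul_right _ hb)


theorem Sys.posN (S : Sys Γ h N m η Z y) (k : ℕ) : 0 < N ^ k := pow_pos (by have := S.hN1; omega) k

theorem Sys.RR_inter (S : Sys Γ h N m η Z y) {j a b c d : ℕ} (hj : j ≤ m) (hbc : b ≤ c) (hd : d ≤ N ^ (m - j))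
    (hcd : c ≤ d)
    {q : Q} (h1 : q ∈ RR N η Z j a b) (h2 : q ∈ RR N η Z j c d) : b = c ∧ q ∈ VV N η j b := by
  have hb : b ≤ N ^ (m - j) := by omega
  rcases h1 with ⟨e, x, h1, h2', h3, h4, rfl⟩ | ⟨e, x, h1, h2', h3, h4, h5⟩ <;>
  rcases h2 with ⟨e', x', g1, g2, g3, g4, g5⟩ | ⟨e', x', g1, g2, g3, g4, g5⟩
  · obtain ⟨rfl, rfl⟩ := S.inj _ _ _ _ h1 (h2'.trans hj) (vld hj h2' hb h4) g1 (g2.trans hj)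
      (vld hj g2 hd g4) g5
    have hle : c * N ^ (j - e) ≤ b * N ^ (j - e) := g3.trans h4
    have hcb : c ≤ b := Nat.le_of_mul_le_mul_right hle (S.posN _)
    have hbc' : b = c := le_antisymm hbc hcb
    subst hbc'
    exact ⟨rfl, e, h1, h2', by rw [le_antisymm h4 g3]⟩
  · exact absurd g5 (S.ηZ _ _ _ _ h1 (h2'.trans hj) (vld hj h2' hb h4))
  · subst g5
    exact absurd h5 (S.ηZ _ _ _ _ g1 (g2.trans hj) (vld hj g2 hd g4))
  · obtain ⟨rfl, rfl⟩ := S.Zd _ _ _ _ _ h5 g5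
    have := Nat.mul_le_mul_right (N ^ (j - e)) hbc
    omega

theorem Sys.Zp_RR (S : Sys Γ h N m η Z y) {j i a b : ℕ} (hj : j + 1 ≤ m) (hi : i < N ^ (m - (j + 1)))
    (hb : b ≤ N ^ (m - j)) {q : Q} (h1 : q ∈ Zp η Z (j + 1) i) : q ∉ RR N η Z j a b := by
  intro h2
  have hj' : j ≤ m := by omega
  rcases h1 with h1 | h1
  · rcases h2 with ⟨e', x', g1, g2, g3, g4, rfl⟩ | ⟨e', x', g1, g2, g3, g4, g5⟩
    · exact S.ηZ _ _ _ _ g1 (g2.trans hj') (vld hj' g2 hb g4) h1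
    · have := (S.Zd _ _ _ _ _ h1 g5).1; omega
  · have : ∃ x, x ≤ N ^ (m - (j + 1)) ∧ q = η (j + 1) x := by
      rcases h1 with h1 | h1
      · exact ⟨i, hi.le, h1⟩
      · exact ⟨i + 1, hi, h1⟩
    obtain ⟨x, hx, rfl⟩ := this
    rcases h2 with ⟨e', x', g1, g2, g3, g4, g5⟩ | ⟨e', x', g1, g2, g3, g4, g5⟩
    · have := (S.inj _ _ _ _ (by omega) hj hx g1 (g2.trans hj') (vld hj' g2 hb g4) g5).1
      omega
    · exact S.ηZ _ _ _ _ (by omega) hj hx g5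

theorem RR_step {j i : ℕ} : RR N η Z j (i * N) ((i + 1) * N) ⊆ RR N η Z (j + 1) i (i + 1) := by
  have key : ∀ e ≤ j, ∀ a, a * N * N ^ (j - e) = a * N ^ (j + 1 - e) := by
    intro e he a
    rw [Nat.sub_add_comm he, pow_succ]; ring
  rintro q (⟨e, x, h1, h2, h3, h4, h5⟩ | ⟨e, x, h1, h2, h3, h4, h5⟩)
  · rw [key e h2] at h3 h4
    exact Or.inl ⟨e, x, h1, by omega, h3, h4, h5⟩
  · rw [key e h2] at h3 h4
    exact Or.inr ⟨e, x, h1, by omega, h3, h4, h5⟩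

theorem Zp_step {j i : ℕ} : Zp η Z (j + 1) i ⊆ RR N η Z (j + 1) i (i + 1) := by
  rintro q (h | h | h)
  · exact Or.inr ⟨j + 1, i, by omega, le_rfl, by simp, by simp, h⟩
  · exact Or.inl ⟨j + 1, i, by omega, le_rfl, by simp, by simp, h⟩
  · exact Or.inl ⟨j + 1, i + 1, by omega, le_rfl, by simp, by simp, h⟩

theorem VV_step {j i : ℕ} : VV N η j (i * N) ⊆ VV N η (j + 1) i := by
  rintro q ⟨e, h1, h2, h3⟩
  refine ⟨e, h1, by omega, ?_⟩
  rw [h3, Nat.sub_add_comm h2, pow_succ]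
  congr 1; ring

theorem VV_top {j i : ℕ} : η (j + 1) i ∈ VV N η (j + 1) i :=
  ⟨j + 1, by omega, le_rfl, by simp⟩

theorem VV_fin (N : ℕ) (η : ℕ → ℕ → Q) (j c : ℕ) :
    ∃ V : Finset Q, V.card ≤ j ∧ ∀ q, q ∈ V ↔ q ∈ VV N η j c := by
  classical
  refine ⟨(Finset.Icc 1 j).image fun e => η e (c * N ^ (j - e)), ?_, ?_⟩
  · exact Finset.card_image_le.trans (by simp)
  · intro q
    simp only [Finset.mem_image, Finset.mem_Icc, VV, Set.mem_ofPred_eq]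
    constructor
    · rintro ⟨e, ⟨h1, h2⟩, h3⟩; exact ⟨e, h1, h2, h3.symm⟩
    · rintro ⟨e, h1, h2, h3⟩; exact ⟨e, ⟨h1, h2⟩, h3.symm⟩

theorem Sys.chain_append (S : Sys Γ h N m η Z y) {j a b : ℕ} (hj : j ≤ m) (hab : a ≤ b) (hb : b + 1 ≤ N ^ (m - j))
    (c1 : Chain Γ N η Z j a b) (c2 : Chain Γ N η Z j b (b + 1)) : Chain Γ N η Z j a (b + 1) := by
  obtain ⟨P, hPc, hPR, hPd, hPV⟩ := c1
  obtain ⟨R, hRc, hRR, hRd, hRV⟩ := c2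
  obtain ⟨V, hVc, hV⟩ := VV_fin N η j b
  obtain ⟨z, hz, hzs, hzu⟩ := pigeon P hPd V hVc (fun i => by simpa [hV] using hPV b hab le_rfl i)
  obtain ⟨w, hw, hws, hwu⟩ := pigeon R hRd V hVc
    (fun i => by simpa [hV] using hRV b le_rfl (by omega) i)
  choose σ hσ using fun i => hws (z i) (hz i).1
  have cross : ∀ i i' x, x ∈ P i → x ∈ R (σ i') → i = i' := by
    intro i i' x h1 h2
    have hx : x ∈ V := (hV x).2 (S.RR_inter hj le_rfl hb (by omega) (hPR i h1) (hRR _ h2)).2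
    have e1 := hzu x hx i h1
    have e2 := hwu x hx _ h2
    rw [hσ] at e2
    exact hPd i i' x h1 (e2 ▸ (hz i').2)
  have hσinj : ∀ i i', σ i = σ i' → i = i' := by
    intro i i' h
    have h1 : z i = z i' := by rw [← hσ i, ← hσ i', h]
    exact hPd i i' (z i) (hz i).2 (h1 ▸ (hz i').2)
  refine ⟨fun i => P i ∪ R (σ i), ?_, ?_, ?_, ?_⟩
  · intro i
    exact (hPc i).union (hRc _) (z i) (hz i).2 (hσ i ▸ (hw (σ i)).2)
  · intro i
    exact Set.union_subset ((hPR i).trans (RR_mono le_rfl (by omega)))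
      ((hRR _).trans (RR_mono hab le_rfl))
  · rintro i i' x (h1 | h1) (h2 | h2)
    · exact hPd _ _ _ h1 h2
    · exact cross _ _ _ h1 h2
    · exact (cross _ _ _ h2 h1).symm
    · exact hσinj _ _ (hRd _ _ _ h1 h2)
  · intro c hc1 hc2 i
    by_cases hc : c ≤ b
    · obtain ⟨v, hv, hv'⟩ := hPV c hc1 hc i
      exact ⟨v, hv, Or.inl hv'⟩
    · obtain ⟨v, hv, hv'⟩ := hRV c (by omega) hc2 (σ i)
      exact ⟨v, hv, Or.inr hv'⟩

theorem Sys.chain_all (S : Sys Γ h N m η Z y) {j : ℕ} (hj : j ≤ m) (H : ∀ i < N ^ (m - j), Chain Γ N η Z j i (i + 1))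
    (a k : ℕ) (hk : a + (k + 1) ≤ N ^ (m - j)) : Chain Γ N η Z j a (a + (k + 1)) := by
  induction k with
  | zero => exact H a (by omega)
  | succ k ih =>
    have := S.chain_append (a := a) (b := a + (k + 1)) hj (Nat.le_add_right _ _) (by omega)
      (ih (by omega)) (H (a + (k + 1)) (by omega))
    exact this

theorem Sys.chain_one (S : Sys Γ h N m η Z y) : ∀ i < N ^ (m - 1), Chain Γ N η Z 1 i (i + 1) := by
  intro i hi
  have hs := S.seg i hi
  refine ⟨fun _ => {b | Rch Γ (Zp η Z 1 i) (η 1 i) b}, fun _ => Cn.comp _ _ _, ?_, ?_, ?_⟩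
  · intro _ b hb
    exact Zp_step (j := 0) hb.right
  · intro i i' _ _ _; exact Subsingleton.elim _ _
  · intro c h1 h2 _
    rcases Nat.eq_or_lt_of_le h1 with rfl | h3
    · exact ⟨η 1 i, VV_top (j := 0), .refl _ hs.left⟩
    · obtain rfl : c = i + 1 := by omega
      exact ⟨η 1 (i + 1), VV_top (j := 0), hs⟩

end absys
end QI

namespace QI
section level
variable {Q : Type*} {Γ : SimpleGraph Q} {h N m : ℕ} {η : ℕ → ℕ → Q} {Z : ℕ → ℕ → Set Q}
  {y : ℕ → ℕ → ℕ → Q}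

theorem Sys.sep (S : Sys Γ h N m η Z y) {j i : ℕ} (hj1 : 1 ≤ j) (hj : j + 1 ≤ m)
    (hi : i < N ^ (m - (j + 1)))
    (H : ∀ i < N ^ (m - j), Chain Γ N η Z j i (i + 1))
    (X : Finset Q) (hX : X.card ≤ j) (P : Q → Prop) (hPX : ∀ a, P a → a ∉ X)
    (hP0 : ∀ s ∈ VV N η (j + 1) i, s ∉ X → P s)
    (hP1 : ∀ a b U, Rch Γ U a b → U ⊆ RR N η Z (j + 1) i (i + 1) → (∀ x ∈ U, x ∉ X) → P a → P b) :
    ∃ t ∈ VV N η (j + 1) (i + 1), P t := by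
  classical
  have hN1 := S.hN1
  have hNh := S.hN
  have hpw : N ^ (m - j) = N ^ (m - (j + 1)) * N := by
    rw [← pow_succ]; congr 1; omega
  have hiN : i * N + N ≤ N ^ (m - j) := by
    rw [hpw]; calc i * N + N = (i + 1) * N := by ring
      _ ≤ _ := Nat.mul_le_mul_right _ hi
  have hjm : j ≤ m := by omega
  have e1 : (i + 1) * N = i * N + N := by ring
  have hsub : RR N η Z j (i * N) (i * N + N) ⊆ RR N η Z (j + 1) i (i + 1) := by
    rw [← e1]; exact RR_step
  by_cases hA : ∃ x ∈ X, x ∈ Zp η Z (j + 1) i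
  · obtain ⟨x, hx, hxZ⟩ := hA
    have hlt : (X.filter (· ∈ RR N η Z j (i * N) (i * N + N))).card < j := by
      refine lt_of_lt_of_le (Finset.card_lt_card ?_) hX
      refine (Finset.filter_ssubset).2 ⟨x, hx, S.Zp_RR hj hi hiN hxZ⟩
    obtain ⟨p, hpc, hpR, hpd, hpV⟩ := S.chain_all hjm H (i * N) (N - 1) (by omega)
    rw [show i * N + (N - 1 + 1) = i * N + N by omega] at hpR hpV
    obtain ⟨a, ha⟩ := missed p hpd _ hlt
    obtain ⟨v, hv, hv'⟩ := hpV (i * N) le_rfl (by omega) a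
    obtain ⟨t, ht, ht'⟩ := hpV (i * N + N) (by omega) le_rfl a
    have hax : ∀ x ∈ p a, x ∉ X := fun x hx hx' =>
      ha x hx (Finset.mem_filter.2 ⟨hx', hpR a hx⟩)
    refine ⟨t, VV_step (by rw [e1]; exact ht), ?_⟩
    exact hP1 v t (p a) (hpc a v hv' t ht') ((hpR a).trans hsub) hax
      (hP0 v (VV_step hv) (hax v hv'))
  · push Not at hA
    have hZX : ∀ x ∈ Zp η Z (j + 1) i, x ∉ X := fun x h1 h2 => hA x h2 h1
    have hstar : ∀ κ τ v, κ < 2 ^ h → (τ + 1 = 2 * κ ∨ τ = 2 * κ + 2) → τ ≤ N →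
        v ∈ VV N η j (i * N + τ) → v ∉ X → (P v ↔ P (y (j + 1) i κ)) := by
      intro κ τ v hκ hτ hτN hv hvX
      have hvR : v ∈ RR N η Z (j + 1) i (i + 1) :=
        hsub (VV_sub (by omega) (by omega) hv)
      obtain ⟨e, he1, he2, rfl⟩ := hv
      have hl := S.link j i κ τ e hj1 hj hi hκ hτ hτN he1 he2
      have h1 : insert (η e ((i * N + τ) * N ^ (j - e))) (Zp η Z (j + 1) i) ⊆
          RR N η Z (j + 1) i (i + 1) := Set.insert_subset hvR Zp_step
      have h2 : ∀ x ∈ insert (η e ((i * N + τ) * N ^ (j - e))) (Zp η Z (j + 1) i), x ∉ X := by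
        rintro x (rfl | hx)
        · exact hvX
        · exact hZX x hx
      exact ⟨hP1 _ _ _ hl.symm h1 h2, hP1 _ _ _ hl h1 h2⟩
    let sm : ℕ → Prop := fun τ => ∃ v ∈ VV N η j (i * N + τ), P v
    let small : ℕ → Prop := fun τ =>
      (X.filter (· ∈ RR N η Z j (i * N + τ) (i * N + τ + 1))).card < j
    have cross : ∀ τ, τ < N → (τ = 0 ∨ sm τ) → small τ → sm (τ + 1) := by
      intro τ hτ h0 hs
      obtain ⟨p, hpc, hpR, hpd, hpV⟩ := H (i * N + τ) (by omega)
      obtain ⟨a, ha⟩ := missed p hpd _ hs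
      obtain ⟨v, hv, hv'⟩ := hpV (i * N + τ) le_rfl (by omega) a
      obtain ⟨t, ht, ht'⟩ := hpV (i * N + τ + 1) (by omega) le_rfl a
      have hax : ∀ x ∈ p a, x ∉ X := fun x hx hx' =>
        ha x hx (Finset.mem_filter.2 ⟨hx', hpR a hx⟩)
      refine ⟨t, ht, ?_⟩
      refine hP1 v t (p a) (hpc a v hv' t ht')
        ((hpR a).trans ((RR_mono (by omega) (by omega)).trans hsub)) hax ?_
      rcases Nat.eq_zero_or_pos τ with rfl | hτ0
      · exact hP0 v (VV_step hv) (hax v hv')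
      · obtain ⟨w, hw, hPw⟩ : sm τ := by
          rcases h0 with h0 | h0
          · omega
          · exact h0
        obtain ⟨κ, hκ, hκτ⟩ : ∃ κ, κ < 2 ^ h ∧ (τ + 1 = 2 * κ ∨ τ = 2 * κ + 2) := by
          rcases Nat.even_or_odd' τ with ⟨c, hc | hc⟩
          · exact ⟨c - 1, by omega, by omega⟩
          · exact ⟨c + 1, by omega, by omega⟩
        exact (hstar κ τ v hκ hκτ hτ.le hv (hax v hv')).2
          ((hstar κ τ w hκ hκτ hτ.le hw (hPX w hPw)).1 hPw)
    have run : ∀ τ0, (τ0 = 0 ∨ sm τ0) → ∀ τ, τ0 ≤ τ → τ ≤ N →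
        (∀ τ', τ0 ≤ τ' → τ' < τ → small τ') → (τ = 0 ∨ sm τ) := by
      intro τ0 h0 τ hτ
      induction τ, hτ using Nat.le_induction with
      | base => intro _ _; exact h0
      | succ k hk ih =>
        intro hkN hs
        exact Or.inr (cross k (by omega) (ih (by omega) (fun τ' a b => hs τ' a (by omega)))
          (hs k hk (by omega)))
    have fin : (N = 0 ∨ sm N) → ∃ t ∈ VV N η (j + 1) (i + 1), P t := by
      rintro (h0 | ⟨t, ht, hPt⟩)
      · omega
      · exact ⟨t, VV_step (by rw [e1]; exact ht), hPt⟩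
    by_cases hB : ∃ τ, τ < N ∧ ¬ small τ
    · obtain ⟨τ, ⟨hτN, hτs⟩, hmin⟩ : ∃ τ, (τ < N ∧ ¬ small τ) ∧
          ∀ τ' < τ, ¬ (τ' < N ∧ ¬ small τ') :=
        ⟨Nat.find hB, Nat.find_spec hB, fun τ' h => Nat.find_min hB h⟩
      have hsτ : ∀ τ' < τ, small τ' := by
        intro τ' h'
        by_contra hc
        exact hmin τ' h' ⟨by omega, hc⟩
      have hXR : ∀ x ∈ X, x ∈ RR N η Z j (i * N + τ) (i * N + τ + 1) := by
        have h2 : X.filter (· ∈ RR N η Z j (i * N + τ) (i * N + τ + 1)) = X :=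
          Finset.eq_of_subset_of_card_le (Finset.filter_subset _ _) (hX.trans (not_lt.1 hτs))
        intro x hx
        rw [← h2] at hx
        exact (Finset.mem_filter.1 hx).2
      have hdis : ∀ c d, τ + 1 < c → c ≤ d → d ≤ N → ∀ x ∈ RR N η Z j (i * N + c) (i * N + d),
          x ∉ X := by
        intro c d hc hcd hd x hx hxX
        have := (S.RR_inter hjm (by omega) (by omega) (by omega) (hXR x hxX) hx).1
        omega
      have hreach := run 0 (Or.inl rfl)
      obtain ⟨κ, hκ, hκτ, hPκ⟩ : ∃ κ, κ < 2 ^ h ∧ τ + 1 < 2 * κ + 2 ∧ P (y (j + 1) i κ) := by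
        rcases Nat.even_or_odd' τ with ⟨c, hc | hc⟩
        · refine ⟨c, by omega, by omega, ?_⟩
          rcases Nat.eq_zero_or_pos c with rfl | hc0
          · apply hP0
            · rw [S.yfirst j i hj1 hj hi]; exact VV_top
            · exact hZX _ (S.ymem j i 0 hj1 hj hi (by positivity))
          · rcases hreach (τ - 1) (by omega) (by omega) (fun τ' _ _ => hsτ τ' (by omega)) with
              h0 | ⟨v, hv, hPv⟩
            · omega
            · exact (hstar c (τ - 1) v (by omega) (by omega) (by omega) hv (hPX v hPv)).1 hPv
        · refine ⟨c + 1, by omega, by omega, ?_⟩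
          rcases hreach τ (by omega) (by omega) (fun τ' _ h => hsτ τ' h) with
              h0 | ⟨v, hv, hPv⟩
          · omega
          · exact (hstar (c + 1) τ v (by omega) (by omega) (by omega) hv (hPX v hPv)).1 hPv
      by_cases hκN : 2 * κ + 2 ≤ N
      · apply fin
        refine run (2 * κ + 2) (Or.inr ?_) N hκN le_rfl ?_
        · have hv : η 1 ((i * N + (2 * κ + 2)) * N ^ (j - 1)) ∈ VV N η j (i * N + (2 * κ + 2)) :=
            ⟨1, le_rfl, hj1, rfl⟩
          refine ⟨_, hv, ?_⟩
          exact (hstar κ (2 * κ + 2) _ hκ (Or.inr rfl) hκN hv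
            (hdis (2 * κ + 2) (2 * κ + 2) hκτ le_rfl hκN _ (VV_sub le_rfl le_rfl hv))).2 hPκ
        · intro τ' h1 h2
          show Finset.card _ < j
          rw [Finset.filter_eq_empty_iff.2]
          · simpa using Nat.succ_le_iff.1 hj1
          · intro x hx hx'
            exact hdis τ' (τ' + 1) (by omega) (by omega) (by omega) x hx' hx
      · obtain rfl : κ = 2 ^ h - 1 := by omega
        rw [S.ylast j i hj1 hj hi] at hPκ
        exact ⟨_, VV_top, hPκ⟩
    · push Not at hB
      exact fin (run 0 (Or.inl rfl) N (by omega) le_rfl (fun τ' _ h => hB τ' h))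

theorem Sys.level (S : Sys Γ h N m η Z y) (hfin : Γ.edgeSet.Finite) {j : ℕ} (hj1 : 1 ≤ j)
    (hj : j + 1 ≤ m) (H : ∀ i < N ^ (m - j), Chain Γ N η Z j i (i + 1)) :
    ∀ i < N ^ (m - (j + 1)), Chain Γ N η Z (j + 1) i (i + 1) := by
  intro i hi
  let R := RR N η Z (j + 1) i (i + 1)
  let Γr : SimpleGraph Q :=
    { Adj := fun a b => Γ.Adj a b ∧ a ∈ R ∧ b ∈ R
      symm := ⟨fun a b h => ⟨h.1.symm, h.2.2, h.2.1⟩⟩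
      loopless := ⟨fun a h => Γ.loopless.irrefl a h.1⟩ }
  have hle : Γr ≤ Γ := fun a b h => h.1
  have hfr : Γr.edgeSet.Finite := hfin.subset (SimpleGraph.edgeSet_mono hle)
  have key : ∀ a b U, Rch Γ U a b → U ⊆ R → ∀ W, U ⊆ W → Rch Γr W a b := by
    intro a b U hU hUR W hW
    induction hU with
    | refl ha => exact .refl _ (hW ha)
    | tail h1 h2 h3 ih => exact .tail ih ⟨h2, hUR h1.right, hUR h3⟩ (hW h3)
  obtain ⟨P, hPc, hPS, hPT, hPd⟩ := menger _ Γr hfr rfl (VV N η (j + 1) i) (VV N η (j + 1) (i + 1))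
    (j + 1) (by
      intro X hX
      obtain ⟨t, ht, s, hs, hst⟩ := S.sep hj1 hj hi H X (by omega)
        (fun q => ∃ s ∈ VV N η (j + 1) i, Rch Γr (↑X)ᶜ s q)
        (fun a ⟨s, _, h⟩ => by simpa using h.right)
        (fun s hs hsX => ⟨s, hs, .refl _ (by simpa using hsX)⟩)
        (fun a b U hU hUR hUX ⟨s, hs, h⟩ => ⟨s, hs, h.trans (key a b U hU hUR _
          (fun x hx => by simpa using hUX x hx))⟩)
      exact ⟨s, hs, t, ht, hst⟩)
  refine ⟨P, fun a => (hPc a).mono hle, ?_, hPd, ?_⟩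
  · intro a x hx
    obtain ⟨s, hs, hsP⟩ := hPS a
    have hsx := hPc a s hsP x hx
    have hsR : s ∈ R := VV_sub le_rfl (by omega) hs
    cases hsx with
    | refl _ => exact hsR
    | tail h1 h2 h3 => exact h2.2.2
  · intro c h1 h2 a
    rcases Nat.eq_or_lt_of_le h1 with rfl | h3
    · exact hPS a
    · obtain rfl : c = i + 1 := by omega
      exact hPT a

theorem Sys.levels (S : Sys Γ h N m η Z y) (hfin : Γ.edgeSet.Finite) (k : ℕ) (hk : k + 1 ≤ m) :
    ∀ i < N ^ (m - (k + 1)), Chain Γ N η Z (k + 1) i (i + 1) := by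
  induction k with
  | zero => exact S.chain_one
  | succ k ih => exact S.level hfin (by omega) hk (ih (by omega))

end level
end QI

namespace QI
section final
variable {Q : Type*} {Γ : SimpleGraph Q} {h N m : ℕ} {η : ℕ → ℕ → Q} {Z : ℕ → ℕ → Set Q}
  {y : ℕ → ℕ → ℕ → Q}

theorem Rch.fin {U : Set Q} {a b : Q} (h : Rch Γ U a b) :
    ∃ Γ₀ ≤ Γ, Γ₀.edgeSet.Finite ∧ Rch Γ₀ U a b := by
  induction h with
  | refl ha => exact ⟨⊥, bot_le, by simp, .refl _ ha⟩
  | @tail b c h1 h2 h3 ih =>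
    obtain ⟨Γ₀, hle, hf, hr⟩ := ih
    refine ⟨Γ₀ ⊔ SimpleGraph.edge b c, ?_, ?_, ?_⟩
    · exact sup_le hle ((SimpleGraph.edge_le_iff _).2 (Or.inr h2))
    · rw [SimpleGraph.edgeSet_sup]
      refine hf.union (Set.Finite.subset (Set.finite_singleton s(b, c)) ?_)
      simp [SimpleGraph.edge]
    · refine .tail (hr.mono le_sup_left subset_rfl) (Or.inr ?_) h3
      rw [SimpleGraph.edge_adj]
      exact ⟨Or.inl ⟨rfl, rfl⟩, h2.ne⟩

theorem fin_family {ι : Type*} [Finite ι] (U : ι → Set Q) (a b : ι → Q)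
    (hr : ∀ i, Rch Γ (U i) (a i) (b i)) :
    ∃ Γ₀ ≤ Γ, Γ₀.edgeSet.Finite ∧ ∀ i, Rch Γ₀ (U i) (a i) (b i) := by
  choose g hg hf hr' using fun i => (hr i).fin
  refine ⟨⨆ i, g i, iSup_le hg, ?_, fun i => (hr' i).mono (le_iSup g i) subset_rfl⟩
  refine Set.Finite.subset (Set.finite_iUnion hf) ?_
  intro e
  induction e with
  | _ x y => 
    intro he
    obtain ⟨i, hi⟩ := SimpleGraph.iSup_adj.1 he
    exact Set.mem_iUnion.2 ⟨i, hi⟩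

theorem Sys.finite (S : Sys Γ h N m η Z y) : ∃ Γ₀ ≤ Γ, Γ₀.edgeSet.Finite ∧ Sys Γ₀ h N m η Z y := by
  have hN1 := S.hN1
  obtain ⟨Γ1, hle1, hf1, h1⟩ := fin_family (ι := Fin (N ^ (m - 1)))
    (fun i => Zp η Z 1 i) (fun i => η 1 i) (fun i => η 1 (i + 1)) (fun i => S.seg i i.2)
  let I : Set (ℕ × ℕ × ℕ × ℕ × ℕ) := {p | 1 ≤ p.1 ∧ p.1 + 1 ≤ m ∧ p.2.1 < N ^ (m - (p.1 + 1)) ∧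
    p.2.2.1 < 2 ^ h ∧ (p.2.2.2.1 + 1 = 2 * p.2.2.1 ∨ p.2.2.2.1 = 2 * p.2.2.1 + 2) ∧
    p.2.2.2.1 ≤ N ∧ 1 ≤ p.2.2.2.2 ∧ p.2.2.2.2 ≤ p.1}
  have hI : I.Finite := by
    refine Set.Finite.subset (Set.finite_Iic (m, N ^ m, 2 ^ h, N, m)) ?_
    rintro ⟨j, i, κ, τ, e⟩ ⟨h1, h2, h3, h4, h5, h6, h7, h8⟩
    simp only at h1 h2 h3 h4 h5 h6 h7 h8
    have : N ^ (m - (j + 1)) ≤ N ^ m := Nat.pow_le_pow_right (by omega) (by omega)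
    refine ⟨?_, ?_, ?_, ?_, ?_⟩ <;> simp only <;> omega
  have : Finite I := hI
  obtain ⟨Γ2, hle2, hf2, h2⟩ := fin_family (ι := I)
    (fun p => insert (η p.1.2.2.2.2 ((p.1.2.1 * N + p.1.2.2.2.1) * N ^ (p.1.1 - p.1.2.2.2.2)))
      (Zp η Z (p.1.1 + 1) p.1.2.1)) (fun p => y (p.1.1 + 1) p.1.2.1 p.1.2.2.1)
    (fun p => η p.1.2.2.2.2 ((p.1.2.1 * N + p.1.2.2.2.1) * N ^ (p.1.1 - p.1.2.2.2.2)))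
    (fun p => S.link _ _ _ _ _ p.2.1 p.2.2.1 p.2.2.2.1 p.2.2.2.2.1 p.2.2.2.2.2.1 p.2.2.2.2.2.2.1
      p.2.2.2.2.2.2.2.1 p.2.2.2.2.2.2.2.2)
  refine ⟨Γ1 ⊔ Γ2, sup_le hle1 hle2, by rw [SimpleGraph.edgeSet_sup]; exact hf1.union hf2, ?_⟩
  refine { S with seg := ?_, link := ?_ }
  · intro i hi
    exact (h1 ⟨i, hi⟩).mono le_sup_left subset_rfl
  · intro j i κ τ e a1 a2 a3 a4 a5 a6 a7 a8
    exact (h2 ⟨(j, i, κ, τ, e), a1, a2, a3, a4, a5, a6, a7, a8⟩).mono le_sup_right subset_rfl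

theorem Sys.main (S : Sys Γ h N m η Z y) {n : ℕ} (hn : 1 ≤ n) (hm : m = n + 2)
    (hNn : 2 * n ≤ N) :
    ∃ U : Fin n → Set Q, (∀ a, Cn Γ (U a)) ∧
      (∀ a, ∃ e x, 1 ≤ e ∧ e ≤ m ∧ x ≤ N ^ (m - e) ∧ η e x ∈ U a) ∧
      (∀ a b x, x ∈ U a → x ∈ U b → a = b) ∧
      ∀ a b, a ≠ b → ∃ u ∈ U a, ∃ v ∈ U b, Γ.Adj u v := by
  obtain ⟨Γ₀, hle, hf, S⟩ := S.finite
  suffices h : ∃ U : Fin n → Set Q, (∀ a, Cn Γ₀ (U a)) ∧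
      (∀ a, ∃ e x, 1 ≤ e ∧ e ≤ m ∧ x ≤ N ^ (m - e) ∧ η e x ∈ U a) ∧
      (∀ a b x, x ∈ U a → x ∈ U b → a = b) ∧
      ∀ a b, a ≠ b → ∃ u ∈ U a, ∃ v ∈ U b, Γ₀.Adj u v by
    obtain ⟨U, h1, h2, h3, h4⟩ := h
    refine ⟨U, fun a => (h1 a).mono hle, h2, h3, fun a b hab => ?_⟩
    obtain ⟨u, hu, v, hv, huv⟩ := h4 a b hab
    exact ⟨u, hu, v, hv, hle huv⟩
  have hN1 := S.hN1
  have H := S.levels hf (n - 1) (by omega)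
  rw [show n - 1 + 1 = n by omega] at H
  have hNN : N ^ (m - n) = N * N := by
    rw [show m - n = 2 by omega]; ring
  have hNN1 : N ^ (m - (n + 1)) = N := by
    rw [show m - (n + 1) = 1 by omega]; ring
  have hpos : N ≤ N * N := Nat.le_mul_self N
  obtain ⟨P, hPc, hPR, hPd, hPV⟩ := S.chain_all (by omega) H 0 (N * N - 1) (by omega)
  rw [show 0 + (N * N - 1 + 1) = N * N by omega] at hPR hPV
  have hi : ∀ a : Fin n, 2 * a.1 < N ^ (m - (n + 1)) := fun a => by
    rw [hNN1]; have := a.2; omega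
  have hL : ∀ a : Fin n, ∀ b, ∃ x v, Rch Γ₀ (Zp η Z (n + 1) (2 * a)) (y (n + 1) (2 * a) 0) x ∧
      v ∈ P b ∧ Γ₀.Adj x v := by
    intro a b
    have hle2 : 2 * a.1 * N + 2 ≤ N * N := by
      have := hi a
      rw [hNN1] at this
      have := Nat.mul_le_mul_right N (Nat.succ_le_iff.2 this)
      have e : (2 * a.1).succ * N = 2 * a.1 * N + N := by rw [Nat.succ_eq_add_one]; ring
      omega
    obtain ⟨v, hv, hvP⟩ := hPV (2 * a * N + 2) (by omega) hle2 b
    have hvR : v ∈ RR N η Z n 0 (N * N) := hPR b hvP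
    have hvZ : v ∉ Zp η Z (n + 1) (2 * a) := fun hc =>
      S.Zp_RR (by omega) (hi a) (by omega) hc hvR
    obtain ⟨e, he1, he2, hve⟩ := hv
    have hl := S.link n (2 * a) 0 2 e hn (by omega) (hi a) (by positivity) (Or.inr rfl) (by omega)
      he1 he2
    rw [← hve] at hl
    obtain ⟨x, y', hx, hy', _, hyU, hxy⟩ := hl.exit
      (fun x => Rch Γ₀ (Zp η Z (n + 1) (2 * a)) (y (n + 1) (2 * a) 0) x)
      (.refl _ (S.ymem n _ 0 hn (by omega) (hi a) (by positivity))) (fun hc => hvZ hc.right)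
    rcases hyU with rfl | hyU
    · exact ⟨x, y', hx, hvP, hxy⟩
    · exact absurd (.tail hx hxy hyU) hy'
  have hsepZ : ∀ a b : Fin n, ∀ x, x ∈ Zp η Z (n + 1) (2 * a) → x ∈ Zp η Z (n + 1) (2 * b) →
      a = b := by
    have hub : ∀ a : Fin n, ∀ x, x ∈ ({η (n + 1) (2 * a), η (n + 1) (2 * a + 1)} : Set Q) →
        ∃ c, c ≤ N ^ (m - (n + 1)) ∧ x = η (n + 1) c ∧ c / 2 = a := by
      rintro a x (rfl | rfl)
      · exact ⟨_, (hi a).le, rfl, by omega⟩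
      · exact ⟨_, hi a, rfl, by omega⟩
    rintro a b x (h1 | h1) (h2 | h2)
    · have := (S.Zd _ _ _ _ _ h1 h2).2
      exact Fin.ext (by omega)
    · obtain ⟨c, hc, rfl, _⟩ := hub b x h2
      exact absurd h1 (S.ηZ _ _ _ _ (by omega) (by omega) hc)
    · obtain ⟨c, hc, rfl, _⟩ := hub a x h1
      exact absurd h2 (S.ηZ _ _ _ _ (by omega) (by omega) hc)
    · obtain ⟨c, hc, rfl, h3⟩ := hub a x h1
      obtain ⟨c', hc', h4, h5⟩ := hub b _ h2
      have := (S.inj _ _ _ _ (by omega) (by omega) hc (by omega) (by omega) hc' h4).2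
      exact Fin.ext (by omega)
  have hPZ : ∀ a b : Fin n, ∀ x, x ∈ P a → x ∉ Zp η Z (n + 1) (2 * b) := fun a b x hx hc =>
      S.Zp_RR (by omega) (hi b) (by omega) hc (hPR a hx)
  refine ⟨fun a => P a ∪ {b | Rch Γ₀ (Zp η Z (n + 1) (2 * a)) (y (n + 1) (2 * a) 0) b},
    ?_, ?_, ?_, ?_⟩
  · intro a
    obtain ⟨x, v, h1, h2, h3⟩ := hL a a
    exact (hPc a).union_adj (Cn.comp _ _ _) v x h2 h1 h3.symm
  · intro a
    obtain ⟨v, ⟨e, h1, h2, h3⟩, hv⟩ := hPV 0 le_rfl (by omega) a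
    exact ⟨e, 0 * N ^ (n - e), h1, by omega, by simp, Or.inl (h3 ▸ hv)⟩
  · rintro a b x (h1 | h1) (h2 | h2)
    · exact hPd _ _ _ h1 h2
    · exact absurd h2.right (hPZ _ _ _ h1)
    · exact absurd h1.right (hPZ _ _ _ h2)
    · exact hsepZ _ _ _ h1.right h2.right
  · intro a b _
    obtain ⟨x, v, h1, h2, h3⟩ := hL a b
    exact ⟨x, Or.inr h1, v, Or.inl h2, h3⟩

end final
end QI

namespace QI
section qi
variable {V V' : Type*}

theorem edist_walk {G : SimpleGraph V} {u v : V} {k : ℕ} (h : G.edist u v ≤ k) :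
    ∃ p : G.Walk u v, p.length ≤ k := by
  have hne : G.edist u v ≠ ⊤ := ne_top_of_le_ne_top (ENat.natCast_ne_top k) h
  obtain ⟨p, hp⟩ := SimpleGraph.exists_walk_of_edist_ne_top hne
  exact ⟨p, by rw [← hp] at h; exact_mod_cast h⟩

theorem edist_tri {G : SimpleGraph V} {u v w : V} {a b : ℕ} (h1 : G.edist u v ≤ a)
    (h2 : G.edist v w ≤ b) : G.edist u w ≤ ((a + b : ℕ) : ℕ∞) := by
  push_cast
  exact G.edist_triangle.trans (add_le_add h1 h2)

theorem edist_adj {G : SimpleGraph V} {u v : V} (h : G.Adj u v) : G.edist u v ≤ ((1 : ℕ) : ℕ∞) := by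
  rw [SimpleGraph.edist_eq_one_iff_adj.2 h]; simp

theorem ball_rch_aux {G : SimpleGraph V} {a u x : V} (k : ℕ) (p : G.Walk u x) :
    ∀ c : ℕ, G.edist a u ≤ c → c + p.length ≤ k → Rch G {z | G.edist a z ≤ k} u x := by
  induction p with
  | nil => 
    intro c h1 h2
    refine .refl _ (h1.trans ?_)
    exact_mod_cast (by omega : c ≤ k)
  | @cons u w x hadj p ih =>
    intro c h1 h2
    simp only [SimpleGraph.Walk.length_cons] at h2
    have h3 := ih (c + 1) (edist_tri h1 (edist_adj hadj)) (by omega)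
    refine Rch.trans (Rch.of_adj hadj ?_ h3.left) h3
    refine h1.trans ?_
    exact_mod_cast (by omega : c ≤ k)

theorem ball_rch {G : SimpleGraph V} {a x : V} {k : ℕ} (h : G.edist a x ≤ k) :
    Rch G {z | G.edist a z ≤ k} a x := by
  obtain ⟨p, hp⟩ := edist_walk h
  exact ball_rch_aux k p 0 (by simp) (by omega)

theorem setConn_of_cn {H : SimpleGraph V'} {U : Set V'} (hU : Cn H U) (hne : U.Nonempty) :
    (H.induce U).Connected := by
  have key : ∀ a b, Rch H U a b → ∀ (ha : a ∈ U) (hb : b ∈ U),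
      (H.induce U).Reachable ⟨a, ha⟩ ⟨b, hb⟩ := by
    intro a b hab
    induction hab with
    | refl _ => intro _ _; exact SimpleGraph.Reachable.refl _
    | @tail b c h1 h2 h3 ih =>
      intro ha hc
      refine (ih ha h1.right).trans (SimpleGraph.Adj.reachable ?_)
      exact h2
  have : Nonempty U := hne.to_subtype
  exact ⟨fun a b => key a.1 b.1 (hU _ a.2 _ b.2) a.2 b.2⟩

/-- Structure needed of the source graph. -/
structure GSys (G : SimpleGraph V) (K h N m : ℕ) (isHub : V → Prop) (hub : ℕ → ℕ → V)
    (Pc : ℕ → ℕ → Set V) (yv : ℕ → ℕ → ℕ → V) : Prop where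
  hN : N + 1 = 2 * 2 ^ h
  hN1 : 3 ≤ N
  ishub : ∀ e x, 1 ≤ e → e ≤ m → x ≤ N ^ (m - e) → isHub (hub e x)
  inj : ∀ e x e' x', 1 ≤ e → e ≤ m → x ≤ N ^ (m - e) → 1 ≤ e' → e' ≤ m → x' ≤ N ^ (m - e') →
    hub e x = hub e' x' → e = e' ∧ x = x'
  sep : ∀ v w, isHub v → isHub w → G.edist v w ≤ ((3 * K : ℕ) : ℕ∞) → v = w
  Pcd : ∀ j i j' i' u u', u ∈ Pc j i → u' ∈ Pc j' i' → (∀ w, isHub w → ¬ G.edist u w ≤ K) →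
    (∀ w, isHub w → ¬ G.edist u' w ≤ K) → G.edist u u' ≤ K → j = j' ∧ i = i'
  seg : ∀ i, i < N ^ (m - 1) → ∃ U, Rch G U (hub 1 i) (hub 1 (i + 1)) ∧
    ∀ u ∈ U, (u ∈ Pc 1 i ∨ isHub u) ∧ ∀ w, isHub w → G.edist u w ≤ ((2 * K : ℕ) : ℕ∞) →
      w = hub 1 i ∨ w = hub 1 (i + 1)
  yfirst : ∀ j i, 1 ≤ j → j + 1 ≤ m → i < N ^ (m - (j + 1)) → yv (j + 1) i 0 = hub (j + 1) i
  ylast : ∀ j i, 1 ≤ j → j + 1 ≤ m → i < N ^ (m - (j + 1)) →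
    yv (j + 1) i (2 ^ h - 1) = hub (j + 1) (i + 1)
  ymem : ∀ j i κ, 1 ≤ j → j + 1 ≤ m → i < N ^ (m - (j + 1)) → κ < 2 ^ h →
    (yv (j + 1) i κ ∈ Pc (j + 1) i ∨ isHub (yv (j + 1) i κ)) ∧
    ∀ w, isHub w → G.edist (yv (j + 1) i κ) w ≤ ((2 * K : ℕ) : ℕ∞) →
      w = hub (j + 1) i ∨ w = hub (j + 1) (i + 1)
  link : ∀ j i κ τ e, 1 ≤ j → j + 1 ≤ m → i < N ^ (m - (j + 1)) → κ < 2 ^ h →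
    (τ + 1 = 2 * κ ∨ τ = 2 * κ + 2) → τ ≤ N → 1 ≤ e → e ≤ j →
    ∃ U, Rch G U (yv (j + 1) i κ) (hub e ((i * N + τ) * N ^ (j - e))) ∧
    ∀ u ∈ U, (u ∈ Pc (j + 1) i ∨ isHub u) ∧ ∀ w, isHub w → G.edist u w ≤ ((2 * K : ℕ) : ℕ∞) →
      w = hub (j + 1) i ∨ w = hub (j + 1) (i + 1) ∨ w = hub e ((i * N + τ) * N ^ (j - e))

theorem GSys.minor {G : SimpleGraph V} {H : SimpleGraph V'} {M A K h N m n : ℕ}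
    {isHub : V → Prop} {hub : ℕ → ℕ → V} {Pc : ℕ → ℕ → Set V} {yv : ℕ → ℕ → ℕ → V} {f : V → V'}
    (hup : ∀ u v : V, H.edist (f u) (f v) ≤ (M : ℕ∞) * G.edist u v + (A : ℕ∞))
    (hlow : ∀ u v : V, G.edist u v ≤ (M : ℕ∞) * H.edist (f u) (f v) + (M : ℕ∞) * (A : ℕ∞))
    (S : GSys G K h N m isHub hub Pc yv) (hK : K = M * (2 * (M + A)) + M * A)
    (hn : 1 ≤ n) (hm : m = n + 2) (hNn : 2 * n ≤ N) :
    ∃ U : Fin n → Set V', (∀ a, (U a).Nonempty) ∧ (∀ a, (H.induce (U a)).Connected) ∧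
      (∀ a b x, x ∈ U a → x ∈ U b → a = b) ∧
      ∀ a b, a ≠ b → ∃ u ∈ U a, ∃ v ∈ U b, H.Adj u v := by
  classical
  let R := M + A
  let B : V → Set V' := fun u => {x | H.edist (f u) x ≤ (R : ℕ∞)}
  let W : V → Set V' := fun v => {x | ∃ u, G.edist u v ≤ K ∧ x ∈ B u}
  have hfB : ∀ u, f u ∈ B u := fun u => by simp [B]
  have hBadj : ∀ u u', G.Adj u u' → f u' ∈ B u := by
    intro u u' hu
    refine (hup u u').trans ?_
    rw [SimpleGraph.edist_eq_one_iff_adj.2 hu]; simp [R]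
  have hBB : ∀ u u' x, x ∈ B u → x ∈ B u' → G.edist u u' ≤ K := by
    intro u u' x h1 h2
    have h2' : H.edist x (f u') ≤ (R : ℕ∞) := by rw [SimpleGraph.edist_comm]; exact h2
    have h3 := edist_tri h1 h2'
    refine (hlow u u').trans ?_
    calc (M : ℕ∞) * H.edist (f u) (f u') + (M : ℕ∞) * (A : ℕ∞)
        ≤ (M : ℕ∞) * ((R + R : ℕ) : ℕ∞) + (M : ℕ∞) * (A : ℕ∞) := by gcongr
      _ = ((M * (R + R) + M * A : ℕ) : ℕ∞) := by push_cast; rfl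
      _ ≤ K := by
        rw [hK]; apply le_of_eq; congr 1; ring
  have hBW : ∀ u v, G.edist u v ≤ K → B u ⊆ W v := fun u v h x hx => ⟨u, h, hx⟩
  have hfW : ∀ v, f v ∈ W v := fun v => hBW v v (by simp) (hfB v)
  have hBWd : ∀ u v x, x ∈ B u → x ∈ W v → G.edist u v ≤ ((2 * K : ℕ) : ℕ∞) := by
    rintro u v x h1 ⟨u', h2, h3⟩
    rw [two_mul]
    exact edist_tri (hBB u u' x h1 h3) h2
  have hWW : ∀ v w, isHub v → isHub w → ∀ x, x ∈ W v → x ∈ W w → v = w := by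
    rintro v w hv hw x ⟨u, h1, h2⟩ h3
    apply S.sep v w hv hw
    rw [show 3 * K = K + 2 * K by ring]
    exact edist_tri (by rw [SimpleGraph.edist_comm]; exact h1) (hBWd u w x h2 h3)
  obtain ⟨q, hqW, hqn⟩ : ∃ q : V' → V', (∀ v x, isHub v → x ∈ W v → q x = f v) ∧
      ∀ x, (∀ v, isHub v → x ∉ W v) → q x = x := by
    refine ⟨fun x => if h : ∃ v, isHub v ∧ x ∈ W v then f h.choose else x, ?_, ?_⟩
    · intro v x hv hx
      have h : ∃ v, isHub v ∧ x ∈ W v := ⟨v, hv, hx⟩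
      simp only [dif_pos h]
      rw [hWW _ v h.choose_spec.1 hv x h.choose_spec.2 hx]
    · intro x hx
      have h : ¬ ∃ v, isHub v ∧ x ∈ W v := fun ⟨v, hv, h⟩ => hx v hv h
      simp only [dif_neg h]
  have hqf : ∀ v, isHub v → q (f v) = f v := fun v hv => hqW v _ hv (hfW v)
  let Γ : SimpleGraph V' :=
    { Adj := fun a b => a ≠ b ∧ ∃ x y, q x = a ∧ q y = b ∧ H.Adj x y
      symm := ⟨fun a b ⟨h1, x, y, h2, h3, h4⟩ => ⟨h1.symm, y, x, h3, h2, h4.symm⟩⟩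
      loopless := ⟨fun a h => h.1 rfl⟩ }
  let Z : ℕ → ℕ → Set V' := fun j i => {x | (∀ v, isHub v → x ∉ W v) ∧ ∃ u ∈ Pc j i, x ∈ B u}
  let η : ℕ → ℕ → V' := fun e x => f (hub e x)
  let y : ℕ → ℕ → ℕ → V' := fun j i κ => q (f (yv j i κ))
  have push : ∀ U a b, Rch H U a b → Rch Γ (q '' U) (q a) (q b) := by
    intro U a b hab
    induction hab with
    | refl ha => exact .refl _ ⟨_, ha, rfl⟩
    | @tail b c h1 h2 h3 ih =>
      by_cases hbc : q b = q c
      · rw [← hbc]; exact ih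
      · exact .tail ih ⟨hbc, b, c, rfl, rfl, h2⟩ ⟨c, h3, rfl⟩
  have okB : ∀ (T : Set V) j i u, ((u ∈ Pc j i ∨ isHub u) ∧
      ∀ w, isHub w → G.edist u w ≤ ((2 * K : ℕ) : ℕ∞) → w ∈ T) →
      q '' (B u) ⊆ Z j i ∪ f '' T := by
    rintro T j i u ⟨h1, h2⟩ _ ⟨x, hx, rfl⟩
    by_cases hxW : ∃ v, isHub v ∧ x ∈ W v
    · obtain ⟨v, hv, hxv⟩ := hxW
      rw [hqW v x hv hxv]
      exact Or.inr ⟨v, h2 v hv (hBWd u v x hx hxv), rfl⟩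
    · push Not at hxW
      rw [hqn x hxW]
      rcases h1 with h1 | h1
      · exact Or.inl ⟨hxW, u, h1, hx⟩
      · exact absurd (hBW u u (by simp) hx) (hxW u h1)
  have okR : ∀ (T : Set V) j i U a b, Rch G U a b → (∀ u ∈ U, (u ∈ Pc j i ∨ isHub u) ∧
      ∀ w, isHub w → G.edist u w ≤ ((2 * K : ℕ) : ℕ∞) → w ∈ T) →
      Rch Γ (Z j i ∪ f '' T) (q (f a)) (q (f b)) := by
    intro T j i U a b hab hU
    induction hab with
    | refl ha => exact .refl _ (okB T j i a (hU a ha) ⟨_, hfB a, rfl⟩)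
    | @tail b c h1 h2 h3 ih =>
      refine ih.trans ((push (B b) _ _ (ball_rch (hBadj b c h2))).monoU (okB T j i b (hU b h1.right)))
  have finj : ∀ v w, isHub v → isHub w → f v = f w → v = w := by
    intro v w hv hw hvw
    exact hWW v w hv hw (f v) (hfW v) (by rw [hvw]; exact hfW w)
  have hZp : ∀ j i, Z j i ∪ f '' {hub j i, hub j (i + 1)} = Zp η Z j i := by
    intro j i; simp [Zp, η, Set.image_pair]
  have SS : Sys Γ h N m η Z y := by
    refine ⟨S.hN, S.hN1, ?_, ?_, ?_, ?_, ?_, ?_, ?_, ?_⟩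
    · intro e x e' x' h1 h2 h3 h4 h5 h6 h7
      exact S.inj e x e' x' h1 h2 h3 h4 h5 h6 (finj _ _ (S.ishub _ _ h1 h2 h3)
        (S.ishub _ _ h4 h5 h6) h7)
    · rintro j i j' i' x ⟨h1, u, hu, hxu⟩ ⟨_, u', hu', hxu'⟩
      refine S.Pcd j i j' i' u u' hu hu' ?_ ?_ (hBB u u' x hxu hxu')
      · exact fun w hw hc => h1 w hw (hBW _ _ hc hxu)
      · exact fun w hw hc => h1 w hw (hBW _ _ hc hxu')
    · rintro e x j i h1 h2 h3 ⟨h4, _⟩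
      exact h4 _ (S.ishub _ _ h1 h2 h3) (hfW _)
    · intro i hi
      have hNp : i + 1 ≤ N ^ (m - 1) := hi
      obtain ⟨U, hU, hU'⟩ := S.seg i hi
      have := okR {hub 1 i, hub 1 (i + 1)} 1 i U _ _ hU (fun u hu => hU' u hu)
      rw [hqf _ (S.ishub _ _ le_rfl (by omega) hi.le), hqf _ (S.ishub _ _ le_rfl (by omega) hNp),
        hZp] at this
      exact this
    · intro j i h1 h2 h3
      show q (f (yv (j + 1) i 0)) = f (hub (j + 1) i)
      rw [S.yfirst j i h1 h2 h3]
      exact hqf _ (S.ishub _ _ (by omega) h2 h3.le)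
    · intro j i h1 h2 h3
      show q (f (yv (j + 1) i (2 ^ h - 1))) = f (hub (j + 1) (i + 1))
      rw [S.ylast j i h1 h2 h3]
      exact hqf _ (S.ishub _ _ (by omega) h2 h3)
    · intro j i κ h1 h2 h3 h4
      have := okB {hub (j + 1) i, hub (j + 1) (i + 1)} (j + 1) i _ (S.ymem j i κ h1 h2 h3 h4)
      rw [hZp] at this
      exact this ⟨_, hfB _, rfl⟩
    · intro j i κ τ e h1 h2 h3 h4 h5 h6 h7 h8
      obtain ⟨U, hU, hU'⟩ := S.link j i κ τ e h1 h2 h3 h4 h5 h6 h7 h8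
      have := okR {hub (j + 1) i, hub (j + 1) (i + 1), hub e ((i * N + τ) * N ^ (j - e))} (j + 1) i
        U _ _ hU (fun u hu => hU' u hu)
      have hjp : N ^ (m - j) = N ^ (m - (j + 1)) * N := by
        rw [← pow_succ]; congr 1; omega
      have hv : (i * N + τ) * N ^ (j - e) ≤ N ^ (m - e) := by
        refine vld (m := m) (j := j) (b := i * N + τ) (by omega) h8 ?_ le_rfl
        have := Nat.mul_le_mul_right N (Nat.succ_le_iff.2 h3)
        rw [Nat.succ_mul] at this
        omega
      rw [hqf (hub e ((i * N + τ) * N ^ (j - e))) (S.ishub _ _ h7 (by omega) hv)] at this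
      refine this.monoU ?_
      rintro x (hx | ⟨w, rfl | rfl | rfl, rfl⟩)
      · exact Or.inr (Or.inl hx)
      · exact Or.inr (Or.inr (Or.inl rfl))
      · exact Or.inr (Or.inr (Or.inr rfl))
      · exact Or.inl rfl
  obtain ⟨U, hUc, hUh, hUd, hUa⟩ := SS.main hn hm hNn
  have hWc : ∀ v, isHub v → ∀ x ∈ W v, Rch H (q ⁻¹' {f v}) (f v) x := by
    rintro v hv x ⟨u, hu, hxu⟩
    have hWs : W v ⊆ q ⁻¹' {f v} := fun z hz => hqW v z hv hz
    have h1 : Rch H (W v) (f u) x := (ball_rch hxu).monoU (hBW u v hu)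
    have h2 : ∀ u', Rch G {z | G.edist v z ≤ K} v u' → Rch H (W v) (f v) (f u') := by
      intro u' hr
      induction hr with
      | refl _ => exact .refl _ (hfW v)
      | @tail b c g1 g2 g3 ih =>
        have hb : G.edist b v ≤ K := by rw [SimpleGraph.edist_comm]; exact g1.right
        exact ih.trans ((ball_rch (hBadj b c g2)).monoU (hBW b v hb))
    have h3 := h2 u (ball_rch (by rw [SimpleGraph.edist_comm]; exact hu))
    exact (h3.trans h1).monoU hWs
  have fib : ∀ x x', q x = q x' → Rch H (q ⁻¹' {q x}) x x' := by
    intro x x' hxx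
    by_cases h1 : ∃ v, isHub v ∧ x ∈ W v
    · obtain ⟨v, hv, hx⟩ := h1
      have e1 := hqW v x hv hx
      by_cases h2 : ∃ v, isHub v ∧ x' ∈ W v
      · obtain ⟨w, hw, hx'⟩ := h2
        have e2 := hqW w x' hw hx'
        obtain rfl := finj v w hv hw (by rw [← e1, ← e2, hxx])
        rw [e1]
        exact (hWc v hv x hx).symm.trans (hWc v hv x' hx')
      · push Not at h2
        have e2 := hqn x' h2
        refine absurd (hfW v) ?_
        rw [← e1, hxx, e2]; exact h2 v hv
    · push Not at h1
      have e1 := hqn x h1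
      by_cases h2 : ∃ v, isHub v ∧ x' ∈ W v
      · obtain ⟨w, hw, hx'⟩ := h2
        have e2 := hqW w x' hw hx'
        refine absurd (hfW w) ?_
        rw [← e2, ← hxx, e1]; exact h1 w hw
      · push Not at h2
        have e2 := hqn x' h2
        rw [e1, e2] at hxx
        subst hxx
        exact .refl _ rfl
  have pull : ∀ U c c', Rch Γ U c c' → ∀ x x', q x = c → q x' = c' → Rch H (q ⁻¹' U) x x' := by
    intro U c c' hr
    induction hr with
    | refl hc =>
      intro x x' h1 h2
      refine (fib x x' (by rw [h1, h2])).monoU ?_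
      rw [h1]
      exact Set.preimage_mono (Set.singleton_subset_iff.2 hc)
    | @tail b c' h1 h2 h3 ih =>
      intro x x' e1 e2
      obtain ⟨_, x1, y1, g1, g2, g3⟩ := h2
      have hy1 : y1 ∈ q ⁻¹' U := by show q y1 ∈ U; rw [g2]; exact h3
      refine (Rch.tail (ih x x1 e1 g1) g3 hy1).trans ((fib y1 x' (by rw [g2, e2])).monoU ?_)
      rw [g2]
      exact Set.preimage_mono (Set.singleton_subset_iff.2 h3)
  have hne : ∀ a, (q ⁻¹' (U a)).Nonempty := by
    intro a
    obtain ⟨e, x, h1, h2, h3, h4⟩ := hUh a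
    refine ⟨f (hub e x), ?_⟩
    show q _ ∈ U a
    rw [hqf _ (S.ishub _ _ h1 h2 h3)]
    exact h4
  refine ⟨fun a => q ⁻¹' (U a), hne, fun a => setConn_of_cn ?_ (hne a), ?_, ?_⟩
  · intro x hx x' hx'
    exact pull (U a) _ _ (hUc a _ hx _ hx') x x' rfl rfl
  · intro a b x h1 h2
    exact hUd a b _ h1 h2
  · intro a b hab
    obtain ⟨u, hu, v, hv, _, x, y, rfl, rfl, hxy⟩ := hUa a b hab
    exact ⟨x, hu, y, hv, hxy⟩

end qi
end QI

namespace QI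
open Ghdm
section conc

/-- Hubs: all elements of gluing sets. -/
def hubR (h d e x : ℕ) : Raw :=
  if e = 1 then .path (x * (d + 1))
  else if x = 0 then .tree e 1 (List.replicate h false)
  else .tree e x (List.replicate h true)

theorem VsetElem_eq (h d jv g e : ℕ) :
    VsetElem h d jv g e = hubR h d e ((g - 1) * NN h ^ (jv - e)) := by
  unfold VsetElem hubR
  split_ifs with h1 <;> simp_all

/-- Nearest hub. -/
def cls (h D : ℕ) : Raw → Raw
  | .path k => hubR h (2 * D) 1 ((k + D) / (2 * D + 1))
  | .tree j i p => if p.head? = some true then hubR h (2 * D) j i else hubR h (2 * D) j (i - 1)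
  | .spine j i k t e s => if s ≤ D then
      (if (leafPos h k).head? = some true then hubR h (2 * D) j i else hubR h (2 * D) j (i - 1))
      else hubR h (2 * D) e (((i - 1) * NN h + t - 1) * NN h ^ (j - 1 - e))

/-- Distance to the core. -/
def psi (D : ℕ) : Raw → ℕ
  | .path k => max (k - (k + D) / (2 * D + 1) * (2 * D + 1)) ((k + D) / (2 * D + 1) * (2 * D + 1) - k)
  | .tree _ _ _ => 0
  | .spine _ _ _ _ _ s => min s (2 * D + 1 - s)

/-- Height in the tree. -/
def lev (h : ℕ) : Raw → ℕ
  | .tree _ _ p => p.length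
  | _ => h

/-- Label of the piece. -/
def lab (D : ℕ) : Raw → ℕ × ℕ
  | .path k => (1, k / (2 * D + 1))
  | .tree j i _ => (j, i - 1)
  | .spine j i _ _ _ _ => (j, i - 1)

variable {h D m : ℕ}

theorem cls_hub (hh : 1 ≤ h) (e x : ℕ) : cls h D (hubR h (2 * D) e x) = hubR h (2 * D) e x := by
  obtain ⟨h, rfl⟩ : ∃ h', h = h' + 1 := ⟨h - 1, by omega⟩
  by_cases he : e = 1
  · subst he
    simp only [hubR, if_true, cls]
    congr 2
    rw [Nat.mul_comm x, Nat.mul_add_div (by omega), Nat.div_eq_of_lt (by omega), Nat.add_zero]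
  · by_cases hx : x = 0
    · subst hx; simp [hubR, he, cls, List.replicate_succ]
    · simp [hubR, he, hx, cls, List.replicate_succ]

theorem psi_hub (e x : ℕ) : psi D (hubR h (2 * D) e x) = 0 := by
  by_cases he : e = 1
  · subst he
    simp only [hubR, if_true, psi]
    have : (x * (2 * D + 1) + D) / (2 * D + 1) = x := by
      rw [Nat.mul_comm x, Nat.mul_add_div (by omega), Nat.div_eq_of_lt (by omega), Nat.add_zero]
    rw [this]; simp
  · by_cases hx : x = 0
    · subst hx; simp [hubR, he, psi]
    · simp [hubR, he, hx, psi]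

theorem lev_hub (e x d : ℕ) : lev h (hubR h d e x) = h := by
  unfold hubR
  split_ifs <;> simp [lev]

theorem canon_hub (hh : 1 ≤ h) (e x d : ℕ) : canon h m (hubR h d e x) = hubR h d e x := by
  obtain ⟨h, rfl⟩ : ∃ h', h = h' + 1 := ⟨h - 1, by omega⟩
  unfold hubR
  split_ifs <;> simp [canon, List.replicate_succ]

theorem cls_canon (hh : 1 ≤ h) (a : Raw) (ha : 1 ≤ lev h a) : cls h D (canon h m a) = cls h D a := by
  rcases a with k | ⟨j, i, p⟩ | _
  · rfl
  · have hp : p ≠ [] := by rintro rfl; simp [lev] at ha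
    simp only [canon, hp, if_false]
    split_ifs with h1
    · obtain ⟨rfl, h2⟩ := h1
      obtain ⟨h, rfl⟩ : ∃ h', h = h' + 1 := ⟨h - 1, by omega⟩
      simp [cls, List.replicate_succ]
    · rfl
  · rfl

theorem psi_canon (a : Raw) : psi D (canon h m a) = psi D a := by
  rcases a with k | ⟨j, i, p⟩ | _
  · rfl
  · simp only [canon]
    split_ifs <;> rfl
  · rfl

theorem lev_canon (a : Raw) : lev h (canon h m a) = lev h a := by
  rcases a with k | ⟨j, i, p⟩ | _
  · rfl
  · simp only [canon]
    split_ifs with h1 h2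
    · simp [lev, h1]
    · simp [lev, h2.1]
    · rfl
  · rfl

/-- Either `canon` does nothing, or gives a hub. -/
theorem canon_cases (a : Raw) (ha : 1 ≤ lev h a) (hv : Valid h (2 * D) m (canon h m a)) :
    canon h m a = a ∨ ∃ e x, canon h m a = hubR h (2 * D) e x := by
  rcases a with k | ⟨j, i, p⟩ | _
  · exact Or.inl rfl
  · have hp : p ≠ [] := by rintro rfl; simp [lev] at ha
    simp only [canon, hp, if_false] at hv ⊢
    split_ifs at hv ⊢ with h1
    · have hj : j ≠ 1 := by have := hv.1; omega
      refine Or.inr ⟨j, i - 1, ?_⟩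
      simp [hubR, hj, show i - 1 ≠ 0 by omega]
    · exact Or.inl rfl
  · exact Or.inl rfl

/-- Spine vertices have positions in range. -/
def sok (D : ℕ) : Raw → Prop
  | .spine _ _ _ _ _ s => 1 ≤ s ∧ s ≤ 2 * D
  | _ => True

theorem sok_valid {a : Raw} (ha : Valid h (2 * D) m (canon h m a)) : sok D a := by
  rcases a with k | ⟨j, i, p⟩ | _
  · trivial
  · trivial
  · obtain ⟨_, _, _, _, _, _, _, _, _, _, _, h1, h2⟩ := ha
    exact ⟨h1, h2⟩

theorem leafPos_length (k : ℕ) : (leafPos h k).length = h := by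
  simp [leafPos, natToBits]

theorem raw_step (hh : 1 ≤ h) (hD : 1 ≤ D) {a b : Raw} (hab : rawAdj h (2 * D) a b)
    (ha : sok D a) (hb : sok D b) :
    (psi D a ≤ psi D b + 1 ∧ psi D b ≤ psi D a + 1) ∧
    (lev h a ≤ lev h b + 1 ∧ lev h b ≤ lev h a + 1) ∧
    (1 ≤ lev h a → 1 ≤ lev h b → psi D a < D → psi D b < D → cls h D a = cls h D b) := by
  cases hab with
  | base k =>
    have hm := Nat.div_add_mod (k + D) (2 * D + 1)
    have hl := Nat.mod_lt (k + D) (show 0 < 2 * D + 1 by omega)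
    have hm' := Nat.div_add_mod (k + 1 + D) (2 * D + 1)
    have hl' := Nat.mod_lt (k + 1 + D) (show 0 < 2 * D + 1 by omega)
    simp only [psi, lev, cls]
    have hc : (k + 1 + D) / (2 * D + 1) = (k + D) / (2 * D + 1) ∨
        ((k + 1 + D) / (2 * D + 1) = (k + D) / (2 * D + 1) + 1) := by
      have h1 : (k + D) / (2 * D + 1) ≤ (k + 1 + D) / (2 * D + 1) :=
        Nat.div_le_div_right (by omega)
      have h2 : (k + 1 + D) / (2 * D + 1) < (k + D) / (2 * D + 1) + 2 := by
        rw [Nat.div_lt_iff_lt_mul (by omega)]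
        rw [Nat.add_mul, Nat.mul_comm ((k + D) / (2 * D + 1))]
        omega
      omega
    generalize (k + D) / (2 * D + 1) = c at *
    generalize (k + 1 + D) / (2 * D + 1) = c' at *
    rw [Nat.mul_comm] at hm hm'
    rcases hc with rfl | rfl
    · generalize c' * (2 * D + 1) = z at *
      refine ⟨⟨by omega, by omega⟩, ⟨by omega, by omega⟩, fun _ _ _ _ => rfl⟩
    · rw [Nat.add_mul, Nat.one_mul] at *
      generalize c * (2 * D + 1) = z at *
      refine ⟨⟨by omega, by omega⟩, ⟨by omega, by omega⟩, fun _ _ _ _ => by omega⟩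
  | child j i p b hp =>
    simp only [psi, lev, cls]
    refine ⟨⟨by omega, by omega⟩, ⟨by simp; omega, by simp⟩, fun h1 _ _ _ => ?_⟩
    cases p with
    | nil => simp at h1
    | cons c p => simp
  | step j i k t e s =>
    simp only [psi, lev, cls]
    refine ⟨⟨by omega, by omega⟩, ⟨by omega, by omega⟩, fun _ _ h1 h2 => ?_⟩
    have : s ≤ D ↔ s + 1 ≤ D := by omega
    simp [this]
  | toLeaf j i k t e =>
    simp only [psi, lev, cls, leafPos_length]
    refine ⟨⟨by omega, by omega⟩, ⟨by omega, by omega⟩, fun _ _ h1 h2 => ?_⟩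
    simp [hD]
  | toV j i k t e =>
    rw [VsetElem_eq, psi_hub, lev_hub, cls_hub hh]
    simp only [psi, lev, cls]
    refine ⟨⟨by omega, by omega⟩, ⟨by omega, by omega⟩, fun _ _ h1 h2 => ?_⟩
    rw [if_neg (by omega)]
  | short j i k t e hd => omega

theorem adj_cases {x y : Verts h (2 * D) m} (hxy : (G h (2 * D) m).Adj x y) :
    ∃ a b, (rawAdj h (2 * D) a b ∨ rawAdj h (2 * D) b a) ∧ x.1 = canon h m a ∧ y.1 = canon h m b ∧
      sok D a ∧ sok D b := by
  have h1 : (SimpleGraph.fromRel (rel h (2 * D) m)).Adj x.1 y.1 := hxy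
  rw [SimpleGraph.fromRel_adj] at h1
  have hx := x.2
  have hy := y.2
  rcases h1.2 with ⟨a, b, hab, ha, hb⟩ | ⟨b, a, hab, hb, ha⟩
  · exact ⟨a, b, Or.inl hab, ha, hb, sok_valid (m := m) (h := h) (ha ▸ hx), sok_valid (m := m) (h := h) (hb ▸ hy)⟩
  · exact ⟨a, b, Or.inr hab, ha, hb, sok_valid (m := m) (h := h) (ha ▸ hx), sok_valid (m := m) (h := h) (hb ▸ hy)⟩

theorem adj_step (hh : 1 ≤ h) (hD : 1 ≤ D) {x y : Verts h (2 * D) m}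
    (hxy : (G h (2 * D) m).Adj x y) :
    psi D y.1 ≤ psi D x.1 + 1 ∧ lev h x.1 ≤ lev h y.1 + 1 ∧
    (1 ≤ lev h x.1 → 1 ≤ lev h y.1 → psi D x.1 < D → psi D y.1 < D →
      cls h D x.1 = cls h D y.1) := by
  obtain ⟨a, b, hab, ha, hb, hsa, hsb⟩ := adj_cases hxy
  rw [ha, hb, psi_canon, psi_canon, lev_canon, lev_canon]
  rcases hab with hab | hab
  · obtain ⟨⟨h1, h2⟩, ⟨h3, h4⟩, h5⟩ := raw_step hh hD hab hsa hsb
    refine ⟨by omega, by omega, fun a1 a2 a3 a4 => ?_⟩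
    rw [cls_canon hh _ a1, cls_canon hh _ a2]
    exact h5 a1 a2 a3 a4
  · obtain ⟨⟨h1, h2⟩, ⟨h3, h4⟩, h5⟩ := raw_step hh hD hab hsb hsa
    refine ⟨by omega, by omega, fun a1 a2 a3 a4 => ?_⟩
    rw [cls_canon hh _ a1, cls_canon hh _ a2]
    exact (h5 a2 a1 a4 a3).symm

theorem walk_inv (hh : 1 ≤ h) (hD : 1 ≤ D) {L : ℕ} (hLh : L < h) (hLD : L < D)
    {x y : Verts h (2 * D) m} (p : (G h (2 * D) m).Walk x y) :
    ∀ t, t + p.length ≤ L → psi D x.1 ≤ t → h ≤ lev h x.1 + t → cls h D x.1 = cls h D y.1 := by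
  induction p with
  | nil => intros; rfl
  | @cons x z y hxz p ih =>
    intro t ht h1 h2
    simp only [SimpleGraph.Walk.length_cons] at ht
    obtain ⟨g1, g2, g3⟩ := adj_step hh hD hxz
    rw [g3 (by omega) (by omega) (by omega) (by omega)]
    exact ih (t + 1) (by omega) (by omega) (by omega)

theorem walk_lev (hh : 1 ≤ h) (hD : 1 ≤ D)
    {x y : Verts h (2 * D) m} (p : (G h (2 * D) m).Walk x y) :
    lev h x.1 ≤ lev h y.1 + p.length := by
  induction p with
  | nil => simp
  | @cons x z y hxz p ih =>
    have := (adj_step hh hD hxz).2.1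
    simp only [SimpleGraph.Walk.length_cons]
    omega

/-- Vertices that are hubs. -/
def isHub (h D m : ℕ) (v : Verts h (2 * D) m) : Prop :=
  ∃ e x, v.1 = hubR h (2 * D) e x

theorem near_hub (hh : 1 ≤ h) (hD : 1 ≤ D) {L : ℕ} (hLh : L < h) (hLD : L < D)
    {u v : Verts h (2 * D) m} (hv : isHub h D m v) (huv : (G h (2 * D) m).edist u v ≤ L) :
    cls h D u.1 = v.1 := by
  rw [SimpleGraph.edist_comm] at huv
  obtain ⟨p, hp⟩ := edist_walk huv
  obtain ⟨e, x, hvx⟩ := hv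
  rw [← walk_inv hh hD hLh hLD p 0 (by omega) (by rw [hvx, psi_hub]) (by rw [hvx, lev_hub]; omega),
    hvx, cls_hub hh]

end conc
end QI

namespace QI
open Ghdm
section conc2
variable {h D m : ℕ}

theorem raw_lab {a b : Raw} (hD : 1 ≤ D) (hab : rawAdj h (2 * D) a b)
    (ha : ∀ e x, a ≠ hubR h (2 * D) e x) (hb : ∀ e x, b ≠ hubR h (2 * D) e x) :
    lab D a = lab D b := by
  cases hab with
  | base k =>
    simp only [lab]
    congr 1
    by_contra hne
    apply hb 1 ((k + 1) / (2 * D + 1))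
    simp only [hubR, if_true]
    congr 1
    rw [Nat.succ_div] at hne
    split_ifs at hne with hd
    · exact (Nat.div_mul_cancel hd).symm
    · exact absurd rfl hne
  | child j i p b hp => rfl
  | step j i k t e s => rfl
  | toLeaf j i k t e => rfl
  | toV j i k t e => exact absurd (VsetElem_eq _ _ _ _ _) (hb _ _)
  | short j i k t e hd => omega

theorem adj_lab (hD : 1 ≤ D) {x y : Verts h (2 * D) m}
    (hxy : (G h (2 * D) m).Adj x y) (hx : ¬ isHub h D m x) (hy : ¬ isHub h D m y)
    (hlx : 1 ≤ lev h x.1) (hly : 1 ≤ lev h y.1) : lab D x.1 = lab D y.1 := by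
  obtain ⟨a, b, hab, ha, hb, -, -⟩ := adj_cases hxy
  have hx' : ∀ e z, x.1 ≠ hubR h (2 * D) e z := fun e z hc => hx ⟨e, z, hc⟩
  have hy' : ∀ e z, y.1 ≠ hubR h (2 * D) e z := fun e z hc => hy ⟨e, z, hc⟩
  have hvx : Valid h (2 * D) m x.1 := x.2
  have hvy : Valid h (2 * D) m y.1 := y.2
  rw [ha] at hvx hlx hx'
  rw [hb] at hvy hly hy'
  rw [lev_canon] at hlx hly
  rcases canon_cases a hlx hvx with h1 | ⟨e, z, h1⟩
  · rcases canon_cases b hly hvy with h2 | ⟨e, z, h2⟩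
    · rw [h1] at hx'
      rw [h2] at hy'
      rw [ha, hb, h1, h2]
      rcases hab with hab | hab
      · exact raw_lab hD hab hx' hy'
      · exact (raw_lab hD hab hy' hx').symm
    · exact absurd h2 (hy' e z)
  · exact absurd h1 (hx' e z)

/-- Pieces. -/
def Pc (h D m : ℕ) (j i : ℕ) : Set (Verts h (2 * D) m) := {u | lev h u.1 = h ∧ lab D u.1 = (j, i)}

theorem Pc_disj (hh : 1 ≤ h) (hD : 1 ≤ D) {K : ℕ} (hK : K < h) (j i j' i' : ℕ)
    (u u' : Verts h (2 * D) m) (hu : u ∈ Pc h D m j i) (hu' : u' ∈ Pc h D m j' i')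
    (hn : ∀ w, isHub h D m w → ¬ (G h (2 * D) m).edist u w ≤ K)
    (hd : (G h (2 * D) m).edist u u' ≤ K) : j = j' ∧ i = i' := by
  have hball : ∀ z, (G h (2 * D) m).edist u z ≤ K → ¬ isHub h D m z ∧ 1 ≤ lev h z.1 := by
    intro z hz
    refine ⟨fun hc => hn z hc hz, ?_⟩
    obtain ⟨p, hp⟩ := edist_walk hz
    have := walk_lev hh hD p
    rw [hu.1] at this
    omega
  have key : ∀ z, Rch (G h (2 * D) m) {z | (G h (2 * D) m).edist u z ≤ K} u z →
      lab D u.1 = lab D z.1 := by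
    intro z hz
    induction hz with
    | refl _ => rfl
    | @tail b c h1 h2 h3 ih =>
      rw [ih]
      obtain ⟨b1, b2⟩ := hball b h1.right
      obtain ⟨c1, c2⟩ := hball c h3
      exact adj_lab hD h2 b1 c1 b2 c2
  have := key u' (ball_rch hd)
  rw [hu.2, hu'.2] at this
  exact ⟨congrArg Prod.fst this, congrArg Prod.snd this⟩

open Classical in
/-- Make a vertex from a raw code. -/
noncomputable def mk (h D m : ℕ) (r : Raw) : Verts h (2 * D) m :=
  if hr : Valid h (2 * D) m r then ⟨r, hr⟩ else ⟨.path 0, Nat.zero_le _⟩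

theorem mk_val {r : Raw} (hr : Valid h (2 * D) m r) : (mk h D m r).1 = r := by
  simp [mk, hr]

theorem NN_eq (h : ℕ) : NN h + 1 = 2 * 2 ^ h := by
  have : 0 < 2 ^ h := by positivity
  unfold NN
  rw [pow_succ]; omega

theorem NN_ge (hh : 1 ≤ h) : 3 ≤ NN h := by
  have h1 := NN_eq h
  have h2 : 2 ^ 1 ≤ 2 ^ h := Nat.pow_le_pow_right (by omega) hh
  omega

theorem valid_hub (hh : 1 ≤ h) {e x : ℕ} (h1 : 1 ≤ e) (h2 : e ≤ m) (h3 : x ≤ NN h ^ (m - e)) :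
    Valid h (2 * D) m (hubR h (2 * D) e x) := by
  have hpos : 0 < NN h ^ (m - e) := pow_pos (by have := NN_ge hh; omega) _
  obtain ⟨h, rfl⟩ : ∃ h', h = h' + 1 := ⟨h - 1, by omega⟩
  unfold hubR
  split_ifs with h4 h5
  · subst h4
    show _ ≤ _
    rw [Nat.mul_comm]
    exact Nat.mul_le_mul_left _ h3
  · refine ⟨by omega, h2, le_rfl, hpos, by simp, by simp [List.replicate_succ], fun _ _ => rfl⟩
  · refine ⟨by omega, h2, by omega, h3, by simp, by simp [List.replicate_succ],
      by simp [List.replicate_succ]⟩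

theorem hub_inj (hh : 1 ≤ h) {e x e' x' : ℕ} (h1 : 1 ≤ e) (h1' : 1 ≤ e')
    (he : hubR h (2 * D) e x = hubR h (2 * D) e' x') : e = e' ∧ x = x' := by
  obtain ⟨h, rfl⟩ : ∃ h', h = h' + 1 := ⟨h - 1, by omega⟩
  unfold hubR at he
  split_ifs at he with a1 a2 a3 a4 a5 a6 a7 a8 <;> simp [List.replicate_succ] at he
  all_goals omega

theorem leafPos_first (h : ℕ) : leafPos h 1 = List.replicate h false := by
  apply List.ext_getElem <;> simp [leafPos, natToBits]

theorem leafPos_last (h : ℕ) : leafPos h (2 ^ h - 1 + 1) = List.replicate h true := by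
  apply List.ext_getElem
  · simp [leafPos, natToBits]
  · intro i h1 h2
    simp [leafPos, natToBits] at h1 ⊢
    omega

theorem valid_leaf (hh : 1 ≤ h) {j i k : ℕ} (h1 : 2 ≤ j) (h2 : j ≤ m) (h3 : i < NN h ^ (m - j)) :
    Valid h (2 * D) m (canon h m (.tree j (i + 1) (leafPos h k))) := by
  have hl := leafPos_length (h := h) k
  have hp : leafPos h k ≠ [] := by
    intro hc; rw [hc] at hl; simp at hl; omega
  simp only [canon, hp, if_false]
  split_ifs with h4
  · obtain ⟨h, rfl⟩ : ∃ h', h = h' + 1 := ⟨h - 1, by omega⟩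
    exact ⟨h1, h2, by omega, by omega, by simp, by simp [List.replicate_succ],
      by simp [List.replicate_succ]⟩
  · refine ⟨h1, h2, by omega, h3, hl.le, fun hc => absurd hc hp, fun hc _ => ?_⟩
    by_contra hne
    exact h4 ⟨hc, by omega⟩

theorem adj_of_raw {a b : Raw} {x y : Verts h (2 * D) m} (hab : rawAdj h (2 * D) a b)
    (hx : x.1 = canon h m a) (hy : y.1 = canon h m b) (hne : x.1 ≠ y.1) :
    (G h (2 * D) m).Adj x y := by
  show (SimpleGraph.fromRel (rel h (2 * D) m)).Adj x.1 y.1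
  rw [SimpleGraph.fromRel_adj]
  exact ⟨hne, Or.inl ⟨a, b, hab, hx, hy⟩⟩

end conc2
end QI

namespace QI
open Ghdm
section conc3

theorem gsys {h D m K : ℕ} (hm : 1 ≤ m) (hh : 1 ≤ h) (hKh : 3 * K < h) (hKD : 3 * K < D) :
    GSys (G h (2 * D) m) K h (NN h) m (isHub h D m) (fun e x => mk h D m (hubR h (2 * D) e x))
      (Pc h D m) (fun j i κ => mk h D m (canon h m (.tree j (i + 1) (leafPos h (κ + 1))))) := by
  have hD : 1 ≤ D := by omega
  have hN1 := NN_ge hh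
  have hNN := NN_eq h
  have hval : ∀ {e x}, 1 ≤ e → e ≤ m → x ≤ NN h ^ (m - e) →
      (mk h D m (hubR h (2 * D) e x)).1 = hubR h (2 * D) e x :=
    fun h1 h2 h3 => mk_val (valid_hub hh h1 h2 h3)
  have hyval : ∀ {j i} κ, 1 ≤ j → j + 1 ≤ m → i < NN h ^ (m - (j + 1)) →
      (mk h D m (canon h m (.tree (j + 1) (i + 1) (leafPos h (κ + 1))))).1 =
      canon h m (.tree (j + 1) (i + 1) (leafPos h (κ + 1))) :=
    fun κ h1 h2 h3 => mk_val (valid_leaf hh (by omega) h2 h3)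
  have hnear : ∀ u w : Verts h (2 * D) m, isHub h D m w →
      (G h (2 * D) m).edist u w ≤ ((2 * K : ℕ) : ℕ∞) → cls h D u.1 = w.1 := fun u w hw hd =>
    near_hub hh hD (by omega) (by omega) hw hd
  have hyok : ∀ j i κ, 1 ≤ j → j + 1 ≤ m → i < NN h ^ (m - (j + 1)) → ∀ u : Verts h (2 * D) m,
      u.1 = canon h m (.tree (j + 1) (i + 1) (leafPos h (κ + 1))) →
      (u ∈ Pc h D m (j + 1) i ∨ isHub h D m u) ∧
      ∀ w, isHub h D m w → (G h (2 * D) m).edist u w ≤ ((2 * K : ℕ) : ℕ∞) →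
        w = mk h D m (hubR h (2 * D) (j + 1) i) ∨ w = mk h D m (hubR h (2 * D) (j + 1) (i + 1)) := by
    intro j i κ h1 h2 h3 u hu
    have hlev : 1 ≤ lev h (.tree (j + 1) (i + 1) (leafPos h (κ + 1))) := by
      simp [lev, leafPos_length, hh]
    constructor
    · rcases canon_cases _ hlev (hu ▸ u.2 : Valid h (2 * D) m _) with hc | ⟨e, x, hc⟩
      · left
        rw [hc] at hu
        constructor
        · rw [hu]; simp [lev, leafPos_length]
        · rw [hu]; simp [lab]
      · exact Or.inr ⟨e, x, hu.trans hc⟩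
    · intro w hw hd
      have hcl := hnear u w hw hd
      rw [hu, cls_canon hh _ hlev] at hcl
      simp only [cls, Nat.add_sub_cancel] at hcl
      split_ifs at hcl
      · exact Or.inr (Subtype.ext (by rw [hval (by omega) h2 h3]; exact hcl.symm))
      · exact Or.inl (Subtype.ext (by rw [hval (by omega) h2 h3.le]; exact hcl.symm))
  refine ⟨hNN, hN1, ?_, ?_, ?_, ?_, ?_, ?_, ?_, ?_, ?_⟩
  · intro e x h1 h2 h3
    exact ⟨e, x, hval h1 h2 h3⟩
  · intro e x e' x' h1 h2 h3 h4 h5 h6 heq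
    have := congrArg Subtype.val heq
    rw [hval h1 h2 h3, hval h4 h5 h6] at this
    exact hub_inj hh h1 h4 this
  · intro v w hv hw hd
    have h1 := near_hub hh hD hKh hKD hw hd
    obtain ⟨e, x, hvx⟩ := hv
    rw [hvx, cls_hub hh, ← hvx] at h1
    exact Subtype.ext h1
  · intro j i j' i' u u' hu hu' hn _ hd
    exact Pc_disj hh hD (by omega) j i j' i' u u' hu hu' hn hd
  · intro i hi
    have hi' : i + 1 ≤ NN h ^ (m - 1) := hi
    refine ⟨{u | ∃ k, i * (2 * D + 1) ≤ k ∧ k ≤ (i + 1) * (2 * D + 1) ∧ u.1 = .path k}, ?_, ?_⟩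
    · have hpv : ∀ s, s ≤ 2 * D + 1 → Valid h (2 * D) m (.path (i * (2 * D + 1) + s)) := by
        intro s hs
        show _ ≤ _
        calc _ ≤ (2 * D + 1) * (i + 1) := by rw [Nat.mul_comm i, Nat.mul_add]; omega
          _ ≤ _ := Nat.mul_le_mul_left _ hi'
      have key : ∀ s, s ≤ 2 * D + 1 → Rch (G h (2 * D) m)
          {u | ∃ k, i * (2 * D + 1) ≤ k ∧ k ≤ (i + 1) * (2 * D + 1) ∧ u.1 = .path k}
          (mk h D m (.path (i * (2 * D + 1)))) (mk h D m (.path (i * (2 * D + 1) + s))) := by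
        intro s
        induction s with
        | zero =>
          intro _
          exact .refl _ ⟨i * (2 * D + 1), le_rfl, Nat.mul_le_mul_right _ (by omega),
            mk_val (hpv 0 (by omega))⟩
        | succ s ih =>
          intro hs
          refine .tail (ih (by omega)) (adj_of_raw (rawAdj.base (i * (2 * D + 1) + s))
            (mk_val (hpv s (by omega))) (mk_val (hpv (s + 1) hs)) ?_) ⟨_, ?_, ?_, mk_val (hpv (s + 1) hs)⟩
          · rw [mk_val (hpv s (by omega)), mk_val (hpv (s + 1) hs)]
            intro hc
            simp only [Raw.path.injEq] at hc
            omega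
          · omega
          · rw [Nat.add_mul]; omega
      have := key (2 * D + 1) le_rfl
      simp only [hubR, if_true]
      rw [show i * (2 * D + 1) + (2 * D + 1) = (i + 1) * (2 * D + 1) by ring] at this
      exact this
    · rintro u ⟨k, hk1, hk2, hu⟩
      constructor
      · by_cases hk : k = (i + 1) * (2 * D + 1)
        · exact Or.inr ⟨1, i + 1, by rw [hu, hk]; simp [hubR]⟩
        · left
          refine ⟨by rw [hu]; rfl, ?_⟩
          rw [hu]
          simp only [lab]
          congr 1
          exact Nat.div_eq_of_lt_le hk1 (by omega)
      · intro w hw hd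
        have hcl := hnear u w hw hd
        rw [hu] at hcl
        simp only [cls] at hcl
        have h1 : i ≤ (k + D) / (2 * D + 1) := by
          rw [Nat.le_div_iff_mul_le (by omega)]; omega
        have h2 : (k + D) / (2 * D + 1) < i + 2 := by
          rw [Nat.div_lt_iff_lt_mul (by omega)]
          rw [Nat.add_mul] at hk2 ⊢
          omega
        rcases (by omega : (k + D) / (2 * D + 1) = i ∨ (k + D) / (2 * D + 1) = i + 1) with h3 | h3
        · rw [h3] at hcl
          exact Or.inl (Subtype.ext (by rw [hval le_rfl hm hi.le]; exact hcl.symm))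
        · rw [h3] at hcl
          exact Or.inr (Subtype.ext (by rw [hval le_rfl hm hi']; exact hcl.symm))
  · intro j i h1 h2 h3
    apply Subtype.ext
    show (mk h D m _).1 = (mk h D m _).1
    rw [hyval 0 h1 h2 h3, hval (by omega) h2 h3.le, leafPos_first]
    obtain ⟨h, rfl⟩ : ∃ h', h = h' + 1 := ⟨h - 1, by omega⟩
    have hj : j ≠ 0 := by omega
    by_cases hi : i = 0
    · simp [canon, hubR, List.replicate_succ, hi, hj]
    · simp [canon, hubR, List.replicate_succ, hi, hj, Nat.pos_of_ne_zero hi]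
  · intro j i h1 h2 h3
    apply Subtype.ext
    show (mk h D m _).1 = (mk h D m _).1
    rw [hyval _ h1 h2 h3, hval (by omega) h2 h3, leafPos_last]
    obtain ⟨h, rfl⟩ : ∃ h', h = h' + 1 := ⟨h - 1, by omega⟩
    have hj : j ≠ 0 := by omega
    simp [canon, hubR, List.replicate_succ, hj]
  · intro j i κ h1 h2 h3 h4
    exact hyok j i κ h1 h2 h3 _ (hyval κ h1 h2 h3)
  · intro j i κ τ e h1 h2 h3 h4 h5 h6 h7 h8
    have hx : (i * NN h + τ) * NN h ^ (j - e) ≤ NN h ^ (m - e) := by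
      have hjp : NN h ^ (m - j) = NN h ^ (m - (j + 1)) * NN h := by
        rw [← pow_succ]; congr 1; omega
      refine vld (m := m) (j := j) (b := i * NN h + τ) (by omega) h8 ?_ le_rfl
      have := Nat.mul_le_mul_right (NN h) (Nat.succ_le_iff.2 h3)
      rw [Nat.succ_mul] at this
      omega
    have hsv : ∀ s, 1 ≤ s → s ≤ 2 * D →
        Valid h (2 * D) m (.spine (j + 1) (i + 1) (κ + 1) (τ + 1) e s) := by
      intro s hs1 hs2
      refine ⟨by omega, h2, by omega, h3, by omega, by omega, by omega, by omega, ?_, h7, by omega,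
        hs1, hs2⟩
      rw [pow_succ]; omega
    let U : Set (Verts h (2 * D) m) := {u | u.1 = canon h m (.tree (j + 1) (i + 1) (leafPos h (κ + 1))) ∨
      (∃ s, 1 ≤ s ∧ s ≤ 2 * D ∧ u.1 = .spine (j + 1) (i + 1) (κ + 1) (τ + 1) e s) ∨
      u.1 = hubR h (2 * D) e ((i * NN h + τ) * NN h ^ (j - e))}
    refine ⟨U, ?_, ?_⟩
    · have key : ∀ s, s + 1 ≤ 2 * D → Rch (G h (2 * D) m) U
          (mk h D m (canon h m (.tree (j + 1) (i + 1) (leafPos h (κ + 1)))))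
          (mk h D m (.spine (j + 1) (i + 1) (κ + 1) (τ + 1) e (s + 1))) := by
        intro s
        induction s with
        | zero =>
          intro hs
          have v1 := hyval κ h1 h2 h3
          have v2 := mk_val (hsv 1 le_rfl (by omega))
          refine Rch.of_adj (adj_of_raw (rawAdj.toLeaf (j + 1) (i + 1) (κ + 1) (τ + 1) e) v1 v2 ?_)
            (Or.inl v1) (Or.inr (Or.inl ⟨1, le_rfl, by omega, v2⟩))
          rw [v1, v2]
          simp only [canon]
          split_ifs <;> simp
        | succ s ih =>
          intro hs
          have v1 := mk_val (hsv (s + 1) (by omega) (by omega))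
          have v2 := mk_val (hsv (s + 1 + 1) (by omega) (by omega))
          refine .tail (ih (by omega)) (adj_of_raw
            (rawAdj.step (j + 1) (i + 1) (κ + 1) (τ + 1) e (s + 1)) v1 v2 ?_)
            (Or.inr (Or.inl ⟨_, by omega, hs, v2⟩))
          rw [v1, v2]
          simp
      have h9 := key (2 * D - 1) (by omega)
      rw [show 2 * D - 1 + 1 = 2 * D by omega] at h9
      have v1 := mk_val (hsv (2 * D) (by omega) (by omega))
      have v2 := hval h7 (by omega) hx
      have hV := rawAdj.toV (h := h) (d := 2 * D) (j + 1) (i + 1) (κ + 1) (τ + 1) e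
      rw [VsetElem_eq] at hV
      simp only [Nat.add_sub_cancel, ← Nat.add_assoc] at hV
      refine .tail h9 (adj_of_raw hV v1 (by rw [canon_hub hh]; exact v2) ?_) (Or.inr (Or.inr v2))
      rw [v1, v2]
      unfold hubR
      split_ifs <;> simp
    · rintro u (hu | ⟨s, hs1, hs2, hu⟩ | hu)
      · obtain ⟨a1, a2⟩ := hyok j i κ h1 h2 h3 u hu
        refine ⟨a1, fun w hw hd => ?_⟩
        rcases a2 w hw hd with a | a
        · exact Or.inl a
        · exact Or.inr (Or.inl a)
      · refine ⟨Or.inl ⟨by rw [hu]; rfl, by rw [hu]; rfl⟩, fun w hw hd => ?_⟩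
        have hcl := hnear u w hw hd
        rw [hu] at hcl
        simp only [cls, Nat.add_sub_cancel, ← Nat.add_assoc] at hcl
        split_ifs at hcl
        · exact Or.inr (Or.inl (Subtype.ext (by rw [hval (by omega) h2 h3]; exact hcl.symm)))
        · exact Or.inl (Subtype.ext (by rw [hval (by omega) h2 h3.le]; exact hcl.symm))
        · exact Or.inr (Or.inr (Subtype.ext (by rw [hval h7 (by omega) hx]; exact hcl.symm)))
      · refine ⟨Or.inr ⟨_, _, hu⟩, fun w hw hd => ?_⟩
        have hcl := hnear u w hw hd
        rw [hu, cls_hub hh] at hcl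
        exact Or.inr (Or.inr (Subtype.ext (by rw [hval h7 (by omega) hx]; exact hcl.symm)))

end conc3
end QI

theorem statement7 (M A n : ℕ) (hM : 1 ≤ M) :
    ∃ h d m : ℕ, 2 ≤ m ∧
      ∀ (V' : Type) (H : SimpleGraph V'),
        ¬ CGT.HasMinor H (⊤ : SimpleGraph (Fin n)) →
          ¬ CGT.QIsometric M A (Ghdm.G h d m) H := by
  rcases Nat.eq_zero_or_pos n with rfl | hn
  · refine ⟨0, 0, 2, le_rfl, fun V' H hno => absurd ?_ hno⟩
    exact ⟨fun x => x.elim0, fun x => x.elim0, fun x => x.elim0, fun x => x.elim0,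
      fun x => x.elim0⟩
  · obtain ⟨K, hK⟩ : ∃ K, K = M * (2 * (M + A)) + M * A := ⟨_, rfl⟩
    refine ⟨3 * K + n + 1, 2 * (3 * K + 1), n + 2, by omega, ?_⟩
    rintro V' H hno ⟨f, hf⟩
    apply hno
    have hNn : 2 * n ≤ Ghdm.NN (3 * K + n + 1) := by
      have h1 := QI.NN_eq (3 * K + n + 1)
      have h2 : 3 * K + n + 1 < 2 ^ (3 * K + n + 1) := Nat.lt_two_pow_self
      omega
    obtain ⟨U, h1, h2, h3, h4⟩ := (QI.gsys (h := 3 * K + n + 1) (D := 3 * K + 1) (m := n + 2) (K := K)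
      (by omega) (by omega) (by omega) (by omega)).minor hf.upper hf.lower hK hn rfl hNn
    refine ⟨U, h1, h2, ?_, ?_⟩
    · intro a b hab
      rw [Set.disjoint_left]
      intro x hx hx'
      exact hab (h3 a b x hx hx')
    · intro a b hab
      exact h4 a b hab
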